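/- arXiv:1506.06383 — 5 statements merged into one kernel-verified Lean document; each statement's English description precedes it below -/
import Mathlib

section
/- Let d ≥ 2 and let φ : ℝ^d → ℝ be smooth with compact support. Then there is a constant C (depending on φ) such that |(-Δ)^{1/2}φ(x)| ≤ C(1+|x|)^{-d-1} for all x ∈ ℝ^d. -/
open MeasureTheory Real Metric Set
open scoped FourierTransform ENNReal
noncomputable section

/-- The Riesz potential normalizing constant. -/
def rieszConst (d : ℕ) (a : ℝ) : ℝ :=
  Real.Gamma (((d : ℝ) - a) / 2) / (2 ^ a * Real.pi ^ ((d : ℝ) / 2) * Real.Gamma (a / 2))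

/-- The Riesz potential `I_a[f]`. -/
def rieszPotential (d : ℕ) (a : ℝ) (f : EuclideanSpace ℝ (Fin d) → ℝ)
    (x : EuclideanSpace ℝ (Fin d)) : ℝ :=
  rieszConst d a * ∫ y, f y * ‖x - y‖ ^ (a - (d : ℝ))

/-- `(-Δ)^{1/2}`, the Fourier multiplier with symbol `|ξ|`. -/
def halfLaplacian (d : ℕ) (φ : EuclideanSpace ℝ (Fin d) → ℝ)
    (x : EuclideanSpace ℝ (Fin d)) : ℝ :=
  (𝓕⁻ (fun ξ : EuclideanSpace ℝ (Fin d) => (‖ξ‖ : ℂ) * 𝓕 (fun y => (φ y : ℂ)) ξ) x).re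

/-- Hausdorff content of order `α` via coverings by closed balls. -/
def hausdorffContent (d : ℕ) (α : ℝ) (ω : Set (EuclideanSpace ℝ (Fin d))) : ℝ≥0∞ :=
  ⨅ (c : ℕ → EuclideanSpace ℝ (Fin d)) (r : ℕ → ℝ) (_ : ∀ j, 0 < r j)
    (_ : ω ⊆ ⋃ j, Metric.closedBall (c j) (r j)), ∑' j, ENNReal.ofReal (r j ^ α)

/-- The Laplacian. -/
def laplacian (d : ℕ) (f : EuclideanSpace ℝ (Fin d) → ℝ) (x : EuclideanSpace ℝ (Fin d)) : ℝ :=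
  ∑ i : Fin d, iteratedFDeriv ℝ 2 f x ![EuclideanSpace.single i 1, EuclideanSpace.single i 1]

/-- Fractional maximal function of order `a`. -/
def fracMaximal (d : ℕ) (a : ℝ) (f : EuclideanSpace ℝ (Fin d) → ℝ)
    (x : EuclideanSpace ℝ (Fin d)) : ℝ≥0∞ :=
  ⨆ (r : ℝ) (_ : 0 < r), ENNReal.ofReal (r ^ (a - (d : ℝ))) *
    ∫⁻ y in Metric.closedBall x r, ENNReal.ofReal |f y|

/-- BMO seminorm (as an extended real). -/
def bmoNorm (d : ℕ) (g : EuclideanSpace ℝ (Fin d) → ℝ) : ℝ≥0∞ :=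
  ⨆ (x : EuclideanSpace ℝ (Fin d)) (r : ℝ) (_ : 0 < r),
    ENNReal.ofReal (⨍ y in Metric.ball x r, |g y - ⨍ z in Metric.ball x r, g z|)


namespace HL

def E (r s : ℝ) : ℝ := 1 - rexp (-(r / s) ^ 2)

lemma E_nonneg (r s : ℝ) : 0 ≤ E r s := by
  unfold E
  have : rexp (-(r / s) ^ 2) ≤ 1 := Real.exp_le_one_iff.mpr (by nlinarith [sq_nonneg (r / s)])
  linarith

lemma E_le_one (r s : ℝ) : E r s ≤ 1 := by
  unfold E
  linarith [Real.exp_pos (-(r / s) ^ 2)]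

lemma E_le_sq (r s : ℝ) : E r s ≤ (r / s) ^ 2 := by
  unfold E
  linarith [Real.add_one_le_exp (-(r / s) ^ 2)]

lemma E_meas : Measurable (fun p : ℝ × ℝ => E p.1 p.2) := by
  unfold E; fun_prop

lemma E_one_int : IntegrableOn (E 1) (Ioi 0) := by
  have hm : Measurable (E 1) := E_meas.comp (measurable_const.prodMk measurable_id)
  rw [← Ioc_union_Ioi_eq_Ioi (zero_le_one' ℝ)]
  refine IntegrableOn.union ?_ ?_
  · refine Integrable.mono' (g := fun _ => (1 : ℝ)) (by simp) hm.aestronglyMeasurable ?_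
    filter_upwards with s
    rw [Real.norm_of_nonneg (E_nonneg _ _)]
    exact E_le_one _ _
  · refine Integrable.mono' (integrableOn_Ioi_rpow_of_lt (a := -2) (by norm_num) one_pos)
      hm.aestronglyMeasurable ?_
    filter_upwards [ae_restrict_mem measurableSet_Ioi] with s hs
    have hs0 : (0 : ℝ) < s := lt_trans one_pos hs
    rw [Real.norm_of_nonneg (E_nonneg _ _), Real.rpow_neg hs0.le, Real.rpow_two]
    refine (E_le_sq _ _).trans (le_of_eq ?_)
    simp

def K : ℝ := ∫ s in Ioi 0, E 1 s

lemma K_pos : 0 < K := by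
  unfold K
  rw [setIntegral_pos_iff_support_of_nonneg_ae _ E_one_int]
  · have : Ioi (0 : ℝ) ⊆ Function.support (E 1) ∩ Ioi 0 := by
      intro s hs
      refine ⟨?_, hs⟩
      have hs' : (0 : ℝ) < s := hs
      have : rexp (-(1 / s) ^ 2) < 1 := by
        rw [Real.exp_lt_one_iff]
        have : 0 < (1 / s) ^ 2 := by positivity
        linarith
      rw [Function.mem_support]
      unfold E
      linarith
    exact lt_of_lt_of_le (by simp) (measure_mono this)
  · filter_upwards with s using E_nonneg _ _

lemma E_scale {r : ℝ} (hr : 0 < r) : E r = fun s => E 1 (r⁻¹ * s) := by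
  funext s
  unfold E
  congr 4
  rw [one_div, mul_inv, inv_inv, div_eq_mul_inv]

lemma E_int {r : ℝ} (hr : 0 ≤ r) : IntegrableOn (E r) (Ioi 0) := by
  rcases hr.eq_or_lt with rfl | h
  · have : E 0 = fun _ => 0 := by funext s; simp [E]
    rw [this]; exact integrableOn_zero
  · rw [E_scale h, integrableOn_Ioi_comp_mul_left_iff (E 1) 0 (inv_pos.mpr h), mul_zero]
    exact E_one_int

lemma E_integral {r : ℝ} (hr : 0 ≤ r) : ∫ s in Ioi 0, E r s = r * K := by
  rcases hr.eq_or_lt with rfl | h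
  · simp [E]
  · rw [E_scale h, integral_comp_mul_left_Ioi (E 1) 0 (inv_pos.mpr h), mul_zero]
    simp [K]

variable {d : ℕ}

local notation "𝕍" => EuclideanSpace ℝ (Fin d)

def op (f : SchwartzMap 𝕍 ℂ) (x : 𝕍) : ℂ :=
  𝓕⁻ (fun ξ : 𝕍 => (‖ξ‖ : ℂ) * 𝓕 (fun y => f y) ξ) x

/-- Fourier transform as a Schwartz map. -/
def ft (f : SchwartzMap 𝕍 ℂ) : SchwartzMap 𝕍 ℂ := 𝓕 f

lemma ft_eq (f : SchwartzMap 𝕍 ℂ) (ξ : 𝕍) : ft f ξ = 𝓕 (fun y => f y) ξ := by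
  unfold ft
  rw [SchwartzMap.fourier_coe]

lemma op_eq (f : SchwartzMap 𝕍 ℂ) (x : 𝕍) :
    op f x = ∫ ξ : 𝕍, Complex.exp ((↑(2 * π * inner ℝ ξ x) * Complex.I)) * ((‖ξ‖ : ℂ) * ft f ξ) := by
  unfold op
  rw [Real.fourierInv_eq']
  simp only [ft_eq, smul_eq_mul]

lemma ft_int1 (f : SchwartzMap 𝕍 ℂ) : Integrable (fun ξ : 𝕍 => ‖ξ‖ * ‖ft f ξ‖) := by
  simpa using (ft f).integrable_pow_mul volume 1

lemma near (f : SchwartzMap 𝕍 ℂ) : ∃ C : ℝ, ∀ x, ‖op f x‖ ≤ C := by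
  refine ⟨∫ ξ : 𝕍, ‖ξ‖ * ‖ft f ξ‖, fun x => ?_⟩
  rw [op_eq]
  refine norm_integral_le_of_norm_le (ft_int1 f) ?_
  filter_upwards with ξ
  rw [norm_mul, Complex.norm_exp_ofReal_mul_I]
  simp

lemma inversion (f : SchwartzMap 𝕍 ℂ) (x : 𝕍) :
    ∫ ξ : 𝕍, Complex.exp ((↑(2 * π * inner ℝ ξ x) * Complex.I)) * ft f ξ = f x := by
  have h : 𝓕⁻ (𝓕 (fun y => f y)) = fun y => f y :=
    f.continuous.fourierInv_fourier_eq f.integrable (by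
      rw [← SchwartzMap.fourier_coe]; exact (𝓕 f).integrable)
  have h2 := congrFun h x
  rw [Real.fourierInv_eq'] at h2
  simpa only [ft_eq, smul_eq_mul] using h2

def g (x : 𝕍) (s : ℝ) (ξ : 𝕍) : ℂ :=
  Complex.exp (-((1 / s ^ 2 : ℝ) : ℂ) * ‖ξ‖ ^ 2 + 2 * π * Complex.I * inner ℝ x ξ)

lemma g_eq (x : 𝕍) (s : ℝ) (ξ : 𝕍) :
    g x s ξ = Complex.exp ((↑(2 * π * inner ℝ ξ x) * Complex.I)) * ((1 - E ‖ξ‖ s : ℝ) : ℂ) := by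
  unfold g E
  rw [sub_sub_cancel, Complex.ofReal_exp, ← Complex.exp_add, real_inner_comm]
  congr 1
  push_cast
  ring

/-- The oscillating factor. -/
def osc (x ξ : 𝕍) : ℂ := Complex.exp ((↑(2 * π * inner ℝ ξ x) * Complex.I))

lemma osc_cont (x : 𝕍) : Continuous (osc x) := by
  unfold osc; fun_prop

lemma osc_norm (x ξ : 𝕍) : ‖osc x ξ‖ = 1 := Complex.norm_exp_ofReal_mul_I _

/-- The double integrand. -/
def F (f : SchwartzMap 𝕍 ℂ) (x : 𝕍) (p : 𝕍 × ℝ) : ℂ :=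
  osc x p.1 * ((E ‖p.1‖ p.2 : ℂ) * ft f p.1)

lemma F_meas (f : SchwartzMap 𝕍 ℂ) (x : 𝕍) : Measurable (F f x) := by
  have h1 : Measurable (fun p : 𝕍 × ℝ => E ‖p.1‖ p.2) :=
    E_meas.comp (f := fun p : 𝕍 × ℝ => (‖p.1‖, p.2)) (by fun_prop)
  have h2 : Measurable (fun p : 𝕍 × ℝ => ft f p.1) :=
    (ft f).continuous.measurable.comp measurable_fst
  have h3 : Measurable (fun p : 𝕍 × ℝ => osc x p.1) :=
    (osc_cont x).measurable.comp measurable_fst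
  have h4 : Measurable (fun p : 𝕍 × ℝ => (E ‖p.1‖ p.2 : ℂ)) := Complex.measurable_ofReal.comp h1
  exact h3.mul (h4.mul h2)

lemma F_norm (f : SchwartzMap 𝕍 ℂ) (x : 𝕍) (p : 𝕍 × ℝ) :
    ‖F f x p‖ = E ‖p.1‖ p.2 * ‖ft f p.1‖ := by
  unfold F
  rw [norm_mul, osc_norm, one_mul, norm_mul, Complex.norm_real,
    Real.norm_of_nonneg (E_nonneg _ _)]

lemma F_int (f : SchwartzMap 𝕍 ℂ) (x : 𝕍) :
    Integrable (F f x) ((volume : Measure 𝕍).prod (volume.restrict (Ioi (0 : ℝ)))) := by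
  rw [integrable_prod_iff (F_meas f x).aestronglyMeasurable]
  constructor
  · filter_upwards with ξ
    unfold F
    have h : Integrable (fun s => (E ‖ξ‖ s : ℂ)) (volume.restrict (Ioi (0 : ℝ))) :=
      Integrable.ofReal (E_int (norm_nonneg ξ))
    exact (h.mul_const (ft f ξ)).const_mul (osc x ξ)
  · simp only [F_norm, integral_mul_const, E_integral (norm_nonneg _)]
    refine ((ft_int1 f).mul_const K).congr ?_
    filter_upwards with ξ
    ring

lemma F_inner (f : SchwartzMap 𝕍 ℂ) (x ξ : 𝕍) :
    ∫ s in Ioi (0 : ℝ), F f x (ξ, s) = K * (osc x ξ * ((‖ξ‖ : ℂ) * ft f ξ)) := by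
  unfold F
  simp only
  rw [integral_const_mul, integral_mul_const, integral_complex_ofReal,
    E_integral (norm_nonneg _)]
  push_cast
  ring

lemma g_int (f : SchwartzMap 𝕍 ℂ) (x : 𝕍) (s : ℝ) :
    Integrable (fun ξ : 𝕍 => g x s ξ * ft f ξ) := by
  refine (ft f).integrable.norm.mono' ?_ ?_
  · have : Continuous (g x s) := by unfold g; fun_prop
    exact (this.mul (ft f).continuous).aestronglyMeasurable
  · filter_upwards with ξ
    rw [g_eq, norm_mul, norm_mul, Complex.norm_exp_ofReal_mul_I, Complex.norm_real, one_mul,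
      Real.norm_of_nonneg (by linarith [E_le_one ‖ξ‖ s])]
    exact mul_le_of_le_one_left (norm_nonneg _) (by linarith [E_nonneg ‖ξ‖ s])

lemma osc_int (f : SchwartzMap 𝕍 ℂ) (x : 𝕍) : Integrable (fun ξ : 𝕍 => osc x ξ * ft f ξ) := by
  refine (ft f).integrable.norm.mono' ?_ ?_
  · exact ((osc_cont x).mul (ft f).continuous).aestronglyMeasurable
  · filter_upwards with ξ
    rw [norm_mul, osc_norm, one_mul]

lemma F_outer (f : SchwartzMap 𝕍 ℂ) (x : 𝕍) (s : ℝ) :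
    ∫ ξ : 𝕍, F f x (ξ, s) = f x - ∫ ξ : 𝕍, g x s ξ * ft f ξ := by
  have h := inversion f x
  rw [← h]
  have := integral_sub (osc_int f x) (g_int f x s)
  unfold osc at this
  rw [← this]
  refine integral_congr_ae (Filter.Eventually.of_forall fun ξ => ?_)
  simp only [g_eq, F, osc]
  push_cast
  ring

lemma fubini (f : SchwartzMap 𝕍 ℂ) (x : 𝕍) :
    (K : ℂ) * op f x = ∫ s in Ioi (0 : ℝ), (f x - ∫ ξ : 𝕍, g x s ξ * ft f ξ) := by
  have hsw := integral_integral_swap (f := fun ξ s => F f x (ξ, s)) (F_int f x)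
  simp only [F_inner, F_outer] at hsw
  rw [← hsw, integral_const_mul, op_eq]
  rfl

lemma g_dual (f : SchwartzMap 𝕍 ℂ) (x : 𝕍) {s : ℝ} (hs : 0 < s) :
    ∫ ξ : 𝕍, g x s ξ * ft f ξ = ∫ y : 𝕍, 𝓕 (g x s) y * f y := by
  have hg : Integrable (g x s) := by
    unfold g
    have := GaussianFourier.integrable_cexp_neg_mul_sq_norm_add (V := 𝕍)
      (b := ((1 / s ^ 2 : ℝ) : ℂ)) (by rw [Complex.ofReal_re]; positivity)
      (2 * π * Complex.I) x
    exact this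
  have := VectorFourier.integral_fourierIntegral_smul_eq_flip (μ := (volume : Measure 𝕍))
    (ν := (volume : Measure 𝕍)) (L := innerₗ 𝕍) Real.continuous_fourierChar
    (by exact continuous_inner) hg f.integrable
  simp only [smul_eq_mul, flip_innerₗ] at this
  simp only [ft_eq]
  exact this.symm

lemma g_bound (x y : 𝕍) {s a : ℝ} (hs : 0 < s) (ha : 0 ≤ a) (hxy : a ≤ ‖x - y‖) :
    ‖𝓕 (g x s) y‖ ≤ π ^ ((d : ℝ) / 2) * (s ^ (d : ℝ) * rexp (-(π * a * s) ^ 2)) := by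
  unfold g
  rw [fourier_gaussian_innerProductSpace' (by rw [Complex.ofReal_re]; positivity)]
  have e1 : (π : ℂ) / ((1 / s ^ 2 : ℝ) : ℂ) = ((π * s ^ 2 : ℝ) : ℂ) := by
    push_cast; field_simp
  have e2 : (-(π : ℂ) ^ 2 * (‖x - y‖ : ℂ) ^ 2 / ((1 / s ^ 2 : ℝ) : ℂ)) =
      ((-(π * ‖x - y‖ * s) ^ 2 : ℝ) : ℂ) := by
    push_cast; field_simp
  have e3 : ((Module.finrank ℝ 𝕍 : ℂ) / 2) = (((d : ℝ) / 2 : ℝ) : ℂ) := by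
    simp
  rw [e1, e2, e3, norm_mul, Complex.norm_cpow_eq_rpow_re_of_pos (by positivity),
    ← Complex.ofReal_exp, Complex.norm_real, Complex.ofReal_re,
    Real.norm_of_nonneg (Real.exp_pos _).le, Real.mul_rpow Real.pi_pos.le (by positivity),
    ← Real.rpow_two, ← Real.rpow_mul hs.le, mul_assoc]
  rw [show (2 : ℝ) * ((d : ℝ) / 2) = d by ring]
  gcongr

lemma far (f : SchwartzMap 𝕍 ℂ) {R : ℝ} (hR : 1 ≤ R) (hf : ∀ y, R < ‖y‖ → f y = 0) :
    ∃ C : ℝ, ∀ x : 𝕍, 2 * R ≤ ‖x‖ → ‖op f x‖ ≤ C * (1 + ‖x‖) ^ (-(d : ℝ) - 1) := by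
  set h : ℝ → ℝ := fun w => w ^ (d : ℝ) * rexp (-(π / 4) ^ 2 * w ^ 2) with hh
  have hhint : IntegrableOn h (Ioi 0) :=
    integrableOn_rpow_mul_exp_neg_mul_sq (by positivity)
      (lt_of_lt_of_le (by norm_num) (Nat.cast_nonneg d))
  set A : ℝ := ∫ y : 𝕍, ‖f y‖ with hA
  refine ⟨K⁻¹ * (A * π ^ ((d : ℝ) / 2) * ∫ w in Ioi 0, h w), fun x hx => ?_⟩
  set a : ℝ := 1 + ‖x‖ with ha
  have ha0 : 0 < a := by positivity
  have hfx : f x = 0 := hf x (by linarith)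
  have hinner : ∀ s : ℝ, 0 < s → ‖f x - ∫ ξ : 𝕍, g x s ξ * ft f ξ‖ ≤
      (A * π ^ ((d : ℝ) / 2) * a ^ (-(d : ℝ))) * h (a * s) := by
    intro s hs
    rw [hfx, zero_sub, norm_neg, g_dual f x hs]
    have hb : ∀ y : 𝕍, ‖𝓕 (g x s) y * f y‖ ≤
        ‖f y‖ * (π ^ ((d : ℝ) / 2) * (s ^ (d : ℝ) * rexp (-(π * (a / 4) * s) ^ 2))) := by
      intro y
      by_cases hy : R < ‖y‖
      · simp [hf y hy]
      · rw [norm_mul, mul_comm]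
        refine mul_le_mul_of_nonneg_left (g_bound x y hs (by positivity) ?_) (norm_nonneg _)
        have := norm_sub_norm_le x y
        linarith
    refine (norm_integral_le_of_norm_le (f.integrable.norm.mul_const _)
      (Filter.Eventually.of_forall hb)).trans (le_of_eq ?_)
    rw [integral_mul_const, hh]
    simp only
    rw [Real.mul_rpow ha0.le hs.le, Real.rpow_neg ha0.le]
    have : a ^ (d : ℝ) ≠ 0 := (Real.rpow_pos_of_pos ha0 _).ne'
    rw [show -(π * (a / 4) * s) ^ 2 = -(π / 4) ^ 2 * (a * s) ^ 2 by ring]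
    rw [← hA]
    field_simp
  have hhint' : IntegrableOn (fun s => h (a * s)) (Ioi 0) := by
    rw [integrableOn_Ioi_comp_mul_left_iff h 0 ha0, mul_zero]
    exact hhint
  have hmain : ‖(K : ℂ) * op f x‖ ≤
      (A * π ^ ((d : ℝ) / 2) * a ^ (-(d : ℝ))) * (a⁻¹ * ∫ w in Ioi 0, h w) := by
    rw [fubini]
    refine (norm_integral_le_of_norm_le (hhint'.const_mul
      (A * π ^ ((d : ℝ) / 2) * a ^ (-(d : ℝ)))) ?_).trans (le_of_eq ?_)
    · filter_upwards [ae_restrict_mem measurableSet_Ioi] with s hs using hinner s hs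
    · rw [integral_const_mul, integral_comp_mul_left_Ioi h 0 ha0, mul_zero, smul_eq_mul]
  rw [norm_mul, Complex.norm_real, Real.norm_of_nonneg K_pos.le] at hmain
  rw [mul_assoc, le_inv_mul_iff₀ K_pos]
  refine hmain.trans (le_of_eq ?_)
  rw [Real.rpow_sub ha0, Real.rpow_one]
  ring

end HL

/-- pointwise decay `|(-Δ)^{1/2}φ(x)| ≤ C(1+|x|)^{-d-1}`. -/
theorem halfLaplacian_decay (d : ℕ) (hd : 2 ≤ d) (φ : EuclideanSpace ℝ (Fin d) → ℝ)
    (hφ : ContDiff ℝ (⊤ : ℕ∞) φ) (hsupp : HasCompactSupport φ) :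
    ∃ C : ℝ, 0 < C ∧ ∀ x : EuclideanSpace ℝ (Fin d),
      |halfLaplacian d φ x| ≤ C * (1 + ‖x‖) ^ (-(d : ℝ) - 1) := by
  have hc : HasCompactSupport (fun y => (φ y : ℂ)) := hsupp.comp_left (g := Complex.ofReal) rfl
  have hs : ContDiff ℝ (⊤ : ℕ∞) (fun y => (φ y : ℂ)) := Complex.ofRealCLM.contDiff.comp hφ
  set f : SchwartzMap (EuclideanSpace ℝ (Fin d)) ℂ := hc.toSchwartzMap hs with hf
  have hfφ : ∀ y, f y = (φ y : ℂ) := fun y => rfl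
  have hhl : ∀ x, |halfLaplacian d φ x| ≤ ‖HL.op f x‖ := fun x => Complex.abs_re_le_norm _
  obtain ⟨R₀, hR₀⟩ := hc.isCompact.isBounded.subset_closedBall (0 : EuclideanSpace ℝ (Fin d))
  set R := max R₀ 1 with hR
  have hR1 : 1 ≤ R := le_max_right _ _
  have hfR : ∀ y, R < ‖y‖ → f y = 0 := by
    intro y hy
    by_contra h
    have := hR₀ (subset_tsupport _ (Function.mem_support.mpr h))
    rw [mem_closedBall_zero_iff] at this
    exact absurd hy (not_lt.mpr (this.trans (le_max_left _ _)))
  obtain ⟨C₁, hC₁⟩ := HL.far f hR1 hfR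
  obtain ⟨C₂, hC₂⟩ := HL.near f
  have h2R : 0 < 1 + 2 * R := by linarith
  refine ⟨|C₁| + |C₂| * (1 + 2 * R) ^ ((d : ℝ) + 1) + 1, by positivity, fun x => (hhl x).trans ?_⟩
  have hx0 : 0 < 1 + ‖x‖ := by positivity
  have hp : 0 < (1 + ‖x‖) ^ (-(d : ℝ) - 1) := Real.rpow_pos_of_pos hx0 _
  have hq : 0 ≤ |C₂| * (1 + 2 * R) ^ ((d : ℝ) + 1) := by positivity
  rcases le_or_gt (2 * R) ‖x‖ with h | h
  · refine (hC₁ x h).trans (mul_le_mul_of_nonneg_right ?_ hp.le)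
    linarith [le_abs_self C₁]
  · have h1 : 1 ≤ (1 + 2 * R) ^ ((d : ℝ) + 1) * (1 + ‖x‖) ^ (-(d : ℝ) - 1) := by
      rw [show -(d : ℝ) - 1 = -((d : ℝ) + 1) by ring, Real.rpow_neg hx0.le, ← div_eq_mul_inv,
        one_le_div (by positivity)]
      gcongr
    calc ‖HL.op f x‖ ≤ |C₂| * 1 := by linarith [hC₂ x, le_abs_self C₂]
      _ ≤ |C₂| * ((1 + 2 * R) ^ ((d : ℝ) + 1) * (1 + ‖x‖) ^ (-(d : ℝ) - 1)) := by gcongr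
      _ = |C₂| * (1 + 2 * R) ^ ((d : ℝ) + 1) * (1 + ‖x‖) ^ (-(d : ℝ) - 1) := by ring
      _ ≤ _ := by
        refine mul_le_mul_of_nonneg_right ?_ hp.le
        linarith [abs_nonneg C₁]
end
end

section
/- Let d ≥ 2, let φ : ℝ^d → ℝ be smooth with compact support, and for t > 0 let φ_t(x) = t^{-d} φ(x/t). Then there is a constant C (depending only on φ and d) such that |(-Δ)^{1/2}[φ_t](x)| ≤ C (t + |x|)^{-d-1} for all t > 0 and x ∈ ℝ^d. -/
open MeasureTheory Real Metric Set
open scoped FourierTransform ENNReal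
noncomputable section

lemma aux_g_int : IntegrableOn (fun v : ℝ => 1 - Real.exp (-((v ^ 2)⁻¹))) (Ioi 0) := by
  refine Integrable.mono' ((integrable_inv_one_add_sq.const_mul 2).integrableOn) ?_ ?_
  · apply Measurable.aestronglyMeasurable
    fun_prop
  · filter_upwards [ae_restrict_mem measurableSet_Ioi] with v hv
    have hv' : 0 < v := hv
    have h1 : Real.exp (-((v ^ 2)⁻¹)) ≤ 1 := Real.exp_le_one_iff.2 (by simp; positivity)
    have h2 := Real.exp_pos (-((v ^ 2)⁻¹))
    have h3 := Real.add_one_le_exp (-((v ^ 2)⁻¹))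
    rw [Real.norm_of_nonneg (by linarith)]
    rw [← div_eq_mul_inv, le_div_iff₀ (by positivity)]
    rcases le_total v 1 with h | h
    · have : v ^ 2 ≤ 1 := by nlinarith
      nlinarith
    · have : 1 ≤ v ^ 2 := by nlinarith
      have h4 : (v ^ 2)⁻¹ * v ^ 2 = 1 := inv_mul_cancel₀ (by positivity)
      have h5 : (v ^ 2)⁻¹ ≤ 1 := inv_le_one_of_one_le₀ this
      nlinarith [mul_le_mul_of_nonneg_right (show 1 - Real.exp (-((v ^ 2)⁻¹)) ≤ (v ^ 2)⁻¹ by linarith) (show 0 ≤ 1 + v ^ 2 by positivity)]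

lemma aux_g_pos : 0 < ∫ v in Ioi (0:ℝ), (1 - Real.exp (-((v ^ 2)⁻¹))) := by
  rw [setIntegral_pos_iff_support_of_nonneg_ae _ aux_g_int]
  · have : Function.support (fun v : ℝ => 1 - Real.exp (-((v ^ 2)⁻¹))) ∩ Ioi 0 = Ioi 0 := by
      apply inter_eq_right.2
      intro v hv
      have hv' : 0 < v := hv
      have h1 : Real.exp (-((v ^ 2)⁻¹)) < 1 := Real.exp_lt_one_iff.2 (by simp; positivity)
      simp only [Function.mem_support]
      linarith
    rw [this]; simp
  · filter_upwards with v
    have h1 : Real.exp (-((v ^ 2)⁻¹)) ≤ 1 := Real.exp_le_one_iff.2 (by simp; positivity)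
    simp only [Pi.zero_apply]
    linarith

lemma aux_scale (v : ℝ) {r : ℝ} :
    1 - Real.exp (-((v ^ 2)⁻¹ * r ^ 2)) = (fun v : ℝ => 1 - Real.exp (-((v ^ 2)⁻¹))) (r⁻¹ * v) := by
  simp [mul_pow, mul_comm]

lemma aux_gr_int {r : ℝ} (hr : 0 ≤ r) :
    IntegrableOn (fun v : ℝ => 1 - Real.exp (-((v ^ 2)⁻¹ * r ^ 2))) (Ioi 0) := by
  rcases hr.eq_or_lt with rfl | hr
  · simp
  · simp_rw [aux_scale]
    rw [integrableOn_Ioi_comp_mul_left_iff (fun v : ℝ => 1 - Real.exp (-((v ^ 2)⁻¹))) 0 (inv_pos.2 hr)]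
    simpa using aux_g_int

lemma aux_gr_eq {r : ℝ} (hr : 0 ≤ r) :
    ∫ v in Ioi (0:ℝ), (1 - Real.exp (-((v ^ 2)⁻¹ * r ^ 2))) =
      r * ∫ v in Ioi (0:ℝ), (1 - Real.exp (-((v ^ 2)⁻¹))) := by
  rcases hr.eq_or_lt with rfl | hr
  · simp
  · simp_rw [aux_scale]
    rw [integral_comp_mul_left_Ioi (fun v : ℝ => 1 - Real.exp (-((v ^ 2)⁻¹))) 0 (inv_pos.2 hr)]
    simp

lemma aux_gauss_int {a : ℝ} (ha : 0 < a) (d : ℕ) {r : ℝ} (hr : 0 < r) :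
    IntegrableOn (fun v : ℝ => v ^ d * Real.exp (-a * (r * v) ^ 2)) (Ioi 0) ∧
    ∫ v in Ioi (0:ℝ), v ^ d * Real.exp (-a * (r * v) ^ 2) =
      r ^ (-(d:ℝ) - 1) * ∫ v in Ioi (0:ℝ), v ^ d * Real.exp (-a * v ^ 2) := by
  constructor
  · have := integrableOn_rpow_mul_exp_neg_mul_sq (b := a * r ^ 2) (by positivity) (s := d) (by linarith [d.cast_nonneg (α := ℝ)])
    simpa [mul_pow, mul_assoc] using this
  · have : ∀ v : ℝ, v ^ d * Real.exp (-a * (r * v) ^ 2) = (r ^ d)⁻¹ * (fun v : ℝ => v ^ d * Real.exp (-a * v ^ 2)) (r * v) := by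
      intro v
      simp only [mul_pow]
      field_simp
    simp_rw [this]
    rw [integral_const_mul, integral_comp_mul_left_Ioi (fun v : ℝ => v ^ d * Real.exp (-a * v ^ 2)) 0 hr]
    rw [sub_eq_add_neg, Real.rpow_add hr, Real.rpow_neg hr.le, Real.rpow_natCast, Real.rpow_neg_one]
    simp [mul_assoc]
lemma aux_A (d : ℕ) (f : SchwartzMap (EuclideanSpace ℝ (Fin d)) ℂ) (x : EuclideanSpace ℝ (Fin d))
    {v : ℝ} (hv : 0 < v) :
    ∫ ξ, Complex.exp (↑(2 * Real.pi * inner ℝ ξ x) * Complex.I) *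
      ((1 - Real.exp (-((v ^ 2)⁻¹ * ‖ξ‖ ^ 2)) : ℝ) * 𝓕 (f : EuclideanSpace ℝ (Fin d) → ℂ) ξ) =
    f x - ∫ y, f y * ((Real.pi / ((v^2)⁻¹ : ℝ) : ℂ) ^ (d / 2 : ℂ) *
      Complex.exp (-Real.pi ^ 2 * ‖x - y‖ ^ 2 / ((v^2)⁻¹ : ℝ))) := by
  have hb : 0 < (((v^2)⁻¹ : ℝ) : ℂ).re := by rw [Complex.ofReal_re]; positivity
  have hF : Integrable (𝓕 (f : EuclideanSpace ℝ (Fin d) → ℂ)) := by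
    rw [← SchwartzMap.fourier_coe]; exact (𝓕 f).integrable
  have hg := GaussianFourier.integrable_cexp_neg_mul_sq_norm_add hb (2 * Real.pi * Complex.I) x
  have h1 : ∫ ξ, Complex.exp (↑(2 * Real.pi * inner ℝ ξ x) * Complex.I) *
      𝓕 (f : EuclideanSpace ℝ (Fin d) → ℂ) ξ = f x := by
    have := congrFun (f.continuous.fourierInv_fourier_eq f.integrable hF) x
    rw [Real.fourierInv_eq'] at this
    simpa using this
  have h2 := VectorFourier.integral_fourierIntegral_smul_eq_flip (L := innerₗ (EuclideanSpace ℝ (Fin d)))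
    (μ := volume) (ν := volume) Real.continuous_fourierChar continuous_inner f.integrable hg
  have h3 : ∀ y : EuclideanSpace ℝ (Fin d), VectorFourier.fourierIntegral 𝐞 volume (innerₗ (EuclideanSpace ℝ (Fin d))).flip
      (fun v_1 ↦ Complex.exp (-(((v^2)⁻¹ : ℝ) : ℂ) * ‖v_1‖ ^ 2 + 2 * Real.pi * Complex.I * (inner ℝ x v_1 : ℝ))) y =
      ((Real.pi / ((v^2)⁻¹ : ℝ) : ℂ) ^ (d / 2 : ℂ) *
      Complex.exp (-Real.pi ^ 2 * ‖x - y‖ ^ 2 / ((v^2)⁻¹ : ℝ))) := by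
    intro y
    rw [flip_innerₗ]
    have := fourier_gaussian_innerProductSpace' hb x y
    simp only [finrank_euclideanSpace, Fintype.card_fin] at this
    rw [← this]; rfl
  have h2' : ∫ ξ, 𝓕 (f : EuclideanSpace ℝ (Fin d) → ℂ) ξ * Complex.exp (-(((v^2)⁻¹ : ℝ) : ℂ) * ‖ξ‖ ^ 2 + 2 * Real.pi * Complex.I * (inner ℝ x ξ : ℝ)) = ∫ y, f y * ((Real.pi / ((v^2)⁻¹ : ℝ) : ℂ) ^ (d / 2 : ℂ) *
      Complex.exp (-Real.pi ^ 2 * ‖x - y‖ ^ 2 / ((v^2)⁻¹ : ℝ))) := by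
    simp_rw [← h3]
    exact h2
  rw [← h2']
  rw [← h1]
  rw [← integral_sub]
  · congr 1
    ext ξ
    rw [Complex.exp_add, real_inner_comm]
    push_cast
    rw [show -((v:ℂ)^2)⁻¹ * ‖ξ‖^2 = -(((v:ℂ)^2)⁻¹ * ‖ξ‖^2) by ring,
      show 2 * (Real.pi:ℂ) * Complex.I * (inner ℝ x ξ : ℝ) = 2 * Real.pi * (inner ℝ x ξ : ℝ) * Complex.I by ring]
    ring
  · refine hF.bdd_mul (c := 1) (Continuous.aestronglyMeasurable (by fun_prop)) ?_
    filter_upwards with ξ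
    rw [Complex.norm_exp_ofReal_mul_I]
  · refine hF.mul_bdd (c := 1) hg.aestronglyMeasurable ?_
    filter_upwards with ξ
    rw [Complex.norm_exp]
    apply Real.exp_le_one_iff.2
    have : (-(((v^2)⁻¹ : ℝ) : ℂ) * ‖ξ‖ ^ 2 + 2 * Real.pi * Complex.I * (inner ℝ x ξ : ℝ)) =
      ((-(v^2)⁻¹ * ‖ξ‖^2 : ℝ) : ℂ) + ((2 * Real.pi * (inner ℝ x ξ : ℝ) : ℝ) : ℂ) * Complex.I := by
      push_cast; ring
    rw [this, Complex.add_re, Complex.ofReal_re, Complex.re_ofReal_mul]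
    simp only [Complex.I_re, mul_zero, add_zero]
    have : 0 ≤ (v^2)⁻¹ * ‖ξ‖^2 := by positivity
    linarith

lemma aux_normF (d : ℕ) (f : SchwartzMap (EuclideanSpace ℝ (Fin d)) ℂ) :
    Integrable (fun ξ => ‖ξ‖ * ‖𝓕 (f : EuclideanSpace ℝ (Fin d) → ℂ) ξ‖) := by
  have := (𝓕 f).integrable_pow_mul volume 1
  simpa [SchwartzMap.fourier_coe] using this

lemma aux_B (d : ℕ) (f : SchwartzMap (EuclideanSpace ℝ (Fin d)) ℂ) (x : EuclideanSpace ℝ (Fin d)) :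
    (∫ v in Ioi (0:ℝ), (1 - Real.exp (-((v ^ 2)⁻¹))) : ℝ) *
      𝓕⁻ (fun ξ => (‖ξ‖ : ℂ) * 𝓕 (f : EuclideanSpace ℝ (Fin d) → ℂ) ξ) x =
    ∫ v in Ioi (0:ℝ), ∫ ξ, Complex.exp (↑(2 * Real.pi * inner ℝ ξ x) * Complex.I) *
      ((1 - Real.exp (-((v ^ 2)⁻¹ * ‖ξ‖ ^ 2)) : ℝ) * 𝓕 (f : EuclideanSpace ℝ (Fin d) → ℂ) ξ) := by
  have hFc : Continuous (𝓕 (f : EuclideanSpace ℝ (Fin d) → ℂ)) := by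
    rw [← SchwartzMap.fourier_coe]; exact (𝓕 f).continuous
  have hn : ∀ v : ℝ, ∀ ξ : EuclideanSpace ℝ (Fin d),
      ‖Complex.exp (↑(2 * Real.pi * inner ℝ ξ x) * Complex.I) *
      ((1 - Real.exp (-((v ^ 2)⁻¹ * ‖ξ‖ ^ 2)) : ℝ) * 𝓕 (f : EuclideanSpace ℝ (Fin d) → ℂ) ξ)‖ =
      (1 - Real.exp (-((v ^ 2)⁻¹ * ‖ξ‖ ^ 2))) * ‖𝓕 (f : EuclideanSpace ℝ (Fin d) → ℂ) ξ‖ := by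
    intro v ξ
    rw [norm_mul, Complex.norm_exp_ofReal_mul_I, one_mul, norm_mul, Complex.norm_real, Real.norm_of_nonneg]
    have : Real.exp (-((v ^ 2)⁻¹ * ‖ξ‖ ^ 2)) ≤ 1 := Real.exp_le_one_iff.2 (by
      have : 0 ≤ (v^2)⁻¹ * ‖ξ‖^2 := by positivity
      linarith)
    linarith
  rw [← integral_integral_swap]
  · rw [Real.fourierInv_eq', ← integral_const_mul]
    congr 1
    ext ξ
    rw [integral_const_mul, integral_mul_const, integral_complex_ofReal, aux_gr_eq (norm_nonneg ξ)]
    push_cast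
    simp only [smul_eq_mul]
    ring
  · rw [integrable_prod_iff]
    · constructor
      · filter_upwards with ξ
        simp only [Function.uncurry]
        apply Integrable.const_mul
        apply Integrable.mul_const
        exact (aux_gr_int (norm_nonneg ξ)).ofReal
      · simp only [Function.uncurry, hn]
        have : (fun ξ : EuclideanSpace ℝ (Fin d) => ∫ v in Ioi (0:ℝ), (1 - Real.exp (-((v ^ 2)⁻¹ * ‖ξ‖ ^ 2))) * ‖𝓕 (f : EuclideanSpace ℝ (Fin d) → ℂ) ξ‖) = fun ξ => (∫ v in Ioi (0:ℝ), (1 - Real.exp (-((v ^ 2)⁻¹)))) * (‖ξ‖ * ‖𝓕 (f : EuclideanSpace ℝ (Fin d) → ℂ) ξ‖) := by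
          ext ξ
          rw [integral_mul_const, aux_gr_eq (norm_nonneg ξ)]
          ring
        rw [this]
        exact (aux_normF d f).const_mul _
    · apply Measurable.aestronglyMeasurable
      have := hFc.measurable
      unfold Function.uncurry
      fun_prop
lemma aux_gnorm (d : ℕ) {v r : ℝ} (hv : 0 < v) :
    ‖(Real.pi / ((v^2)⁻¹ : ℝ) : ℂ) ^ (d / 2 : ℂ) *
      Complex.exp (-Real.pi ^ 2 * (r : ℂ) ^ 2 / ((v^2)⁻¹ : ℝ))‖ =
    Real.pi ^ ((d:ℝ) / 2) * v ^ d * Real.exp (- (Real.pi ^ 2 * (r * v) ^ 2)) := by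
  rw [norm_mul]
  congr 1
  · rw [← Complex.ofReal_div, Complex.norm_cpow_eq_rpow_re_of_pos (by positivity)]
    have : ((d:ℂ) / 2).re = (d:ℝ) / 2 := by
      rw [show ((d:ℂ) / 2) = (((d:ℝ)/2 : ℝ) : ℂ) by push_cast; rfl, Complex.ofReal_re]
    rw [this, div_inv_eq_mul, Real.mul_rpow Real.pi_pos.le (by positivity), ← Real.rpow_natCast v 2, ← Real.rpow_mul hv.le,
      ← Real.rpow_natCast v d]
    congr 2
    push_cast; ring
  · rw [Complex.norm_exp]
    congr 1
    rw [show (-(Real.pi:ℂ) ^ 2 * (r : ℂ) ^ 2 / ((v^2)⁻¹ : ℝ)) = ((-Real.pi^2 * r^2 / (v^2)⁻¹ : ℝ) : ℂ) by push_cast; rfl,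
      Complex.ofReal_re, div_inv_eq_mul]
    ring

lemma aux_far (d : ℕ) (f : SchwartzMap (EuclideanSpace ℝ (Fin d)) ℂ) {R : ℝ}  (hR : 1 ≤ R)
    (hf : ∀ y, R < ‖y‖ → f y = 0) (x : EuclideanSpace ℝ (Fin d)) (hx : 2 * R ≤ ‖x‖) :
    (∫ v in Ioi (0:ℝ), (1 - Real.exp (-((v ^ 2)⁻¹))) : ℝ) *
      ‖𝓕⁻ (fun ξ => (‖ξ‖ : ℂ) * 𝓕 (f : EuclideanSpace ℝ (Fin d) → ℂ) ξ) x‖ ≤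
    ((∫ y, ‖f y‖) * Real.pi ^ ((d:ℝ) / 2) *
      ∫ v in Ioi (0:ℝ), v ^ d * Real.exp (-(Real.pi ^ 2 / 4) * v ^ 2)) * ‖x‖ ^ (-(d:ℝ) - 1) := by
  have hx0 : 0 < ‖x‖ := by linarith
  have hfx : f x = 0 := hf x (by linarith)
  obtain ⟨hi, he⟩ := aux_gauss_int (a := Real.pi ^ 2 / 4) (by positivity) d hx0
  have hc := aux_g_pos
  have hB := congrArg norm (aux_B d f x)
  rw [norm_mul, Complex.norm_real, Real.norm_of_nonneg hc.le] at hB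
  rw [hB]
  calc _ ≤ ∫ v in Ioi (0:ℝ), ((∫ y, ‖f y‖) * Real.pi ^ ((d:ℝ) / 2)) * (v ^ d * Real.exp (-(Real.pi ^ 2 / 4) * (‖x‖ * v) ^ 2)) := by
        apply norm_integral_le_of_norm_le
        · exact Integrable.const_mul hi _
        · filter_upwards [ae_restrict_mem measurableSet_Ioi] with v hv
          have hv' : 0 < v := hv
          rw [aux_A d f x hv', hfx, zero_sub, norm_neg]
          rw [show ((∫ y, ‖f y‖) * Real.pi ^ ((d:ℝ) / 2)) * (v ^ d * Real.exp (-(Real.pi ^ 2 / 4) * (‖x‖ * v) ^ 2)) =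
            (∫ y, ‖f y‖) * (Real.pi ^ ((d:ℝ) / 2) * v ^ d * Real.exp (-(Real.pi ^ 2 / 4) * (‖x‖ * v) ^ 2)) by ring,
            ← integral_mul_const]
          apply norm_integral_le_of_norm_le
          · exact f.integrable.norm.mul_const _
          · filter_upwards with y
            rw [norm_mul, aux_gnorm d hv']
            rcases le_or_gt ‖y‖ R with hy | hy
            · gcongr
              have h1 : ‖x‖ / 2 ≤ ‖x - y‖ := by
                have := norm_sub_norm_le x y
                linarith
              have h2 : (‖x‖ / 2 * v) ^ 2 ≤ (‖x - y‖ * v) ^ 2 := by gcongr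
              nlinarith [sq_nonneg Real.pi, mul_le_mul_of_nonneg_left h2 (sq_nonneg Real.pi)]
            · simp [hf y hy]
    _ = _ := by
        rw [integral_const_mul, he]
        ring

lemma aux_near (d : ℕ) (f : SchwartzMap (EuclideanSpace ℝ (Fin d)) ℂ) (x : EuclideanSpace ℝ (Fin d)) :
    ‖𝓕⁻ (fun ξ => (‖ξ‖ : ℂ) * 𝓕 (f : EuclideanSpace ℝ (Fin d) → ℂ) ξ) x‖ ≤
      ∫ ξ, ‖ξ‖ * ‖𝓕 (f : EuclideanSpace ℝ (Fin d) → ℂ) ξ‖ := by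
  rw [Real.fourierInv_eq']
  apply norm_integral_le_of_norm_le (aux_normF d f)
  filter_upwards with ξ
  rw [norm_smul, Complex.norm_exp_ofReal_mul_I, one_mul, norm_mul, Complex.norm_real, norm_norm]

set_option maxHeartbeats 1000000 in
lemma aux_single (d : ℕ) (f : SchwartzMap (EuclideanSpace ℝ (Fin d)) ℂ) {R : ℝ}  (hR : 1 ≤ R)
    (hf : ∀ y, R < ‖y‖ → f y = 0) : ∃ C : ℝ, 0 < C ∧ ∀ x : EuclideanSpace ℝ (Fin d),
    ‖𝓕⁻ (fun ξ => (‖ξ‖ : ℂ) * 𝓕 (f : EuclideanSpace ℝ (Fin d) → ℂ) ξ) x‖ ≤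
      C * (1 + ‖x‖) ^ (-(d:ℝ) - 1) := by
  have hc := aux_g_pos
  set c := (∫ v in Ioi (0:ℝ), (1 - Real.exp (-((v ^ 2)⁻¹))) : ℝ) with hcdef
  set K := ((∫ y, ‖f y‖) * Real.pi ^ ((d:ℝ) / 2) *
      ∫ v in Ioi (0:ℝ), v ^ d * Real.exp (-(Real.pi ^ 2 / 4) * v ^ 2)) with hK
  set M := ∫ ξ, ‖ξ‖ * ‖𝓕 (f : EuclideanSpace ℝ (Fin d) → ℂ) ξ‖ with hM
  have hK0 : 0 ≤ K := by
    apply mul_nonneg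
    · have : 0 ≤ ∫ y, ‖f y‖ := integral_nonneg (fun _ => norm_nonneg _)
      positivity
    · apply setIntegral_nonneg measurableSet_Ioi
      intro v hv
      have : 0 < v := hv
      positivity
  have hM0 : 0 ≤ M := integral_nonneg (fun _ => by positivity)
  clear_value c K M
  have hneg : -(d:ℝ) - 1 ≤ 0 := by linarith [d.cast_nonneg (α := ℝ)]
  refine ⟨K / c * (1/2) ^ (-(d:ℝ) - 1) + M * (1 + 2 * R) ^ ((d:ℝ) + 1) + 1, by positivity, fun x => ?_⟩
  rcases le_total (2 * R) ‖x‖ with hx | hx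
  · have h1 := aux_far d f hR hf x hx
    rw [← hcdef, ← hK] at h1
    have h2 : ‖𝓕⁻ (fun ξ => (‖ξ‖ : ℂ) * 𝓕 (f : EuclideanSpace ℝ (Fin d) → ℂ) ξ) x‖ ≤ K / c * ‖x‖ ^ (-(d:ℝ) - 1) := by
      rw [div_mul_eq_mul_div, le_div_iff₀ hc, mul_comm]
      exact h1
    have h3 : ‖x‖ ^ (-(d:ℝ) - 1) ≤ (1/2) ^ (-(d:ℝ) - 1) * (1 + ‖x‖) ^ (-(d:ℝ) - 1) := by
      rw [← Real.mul_rpow (by norm_num) (by positivity)]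
      apply Real.rpow_le_rpow_of_nonpos (by positivity) _ hneg
      linarith
    calc _ ≤ K / c * ‖x‖ ^ (-(d:ℝ) - 1) := h2
      _ ≤ K / c * ((1/2) ^ (-(d:ℝ) - 1) * (1 + ‖x‖) ^ (-(d:ℝ) - 1)) := by gcongr
      _ = (K / c * (1/2) ^ (-(d:ℝ) - 1)) * (1 + ‖x‖) ^ (-(d:ℝ) - 1) := by ring
      _ ≤ _ := by
        gcongr
        have : 0 ≤ M * (1 + 2 * R) ^ ((d:ℝ) + 1) := by positivity
        linarith
  · have h1 := aux_near d f x
    rw [← hM] at h1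
    have h3 : 1 ≤ (1 + 2 * R) ^ ((d:ℝ) + 1) * (1 + ‖x‖) ^ (-(d:ℝ) - 1) := by
      rw [show -(d:ℝ) - 1 = -((d:ℝ) + 1) by ring, Real.rpow_neg (by positivity), ← div_eq_mul_inv,
        one_le_div (by positivity)]
      gcongr
    calc _ ≤ M * 1 := by linarith
      _ ≤ M * ((1 + 2 * R) ^ ((d:ℝ) + 1) * (1 + ‖x‖) ^ (-(d:ℝ) - 1)) := by gcongr
      _ = (M * (1 + 2 * R) ^ ((d:ℝ) + 1)) * (1 + ‖x‖) ^ (-(d:ℝ) - 1) := by ring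
      _ ≤ _ := by
        gcongr
        have : 0 ≤ K / c * (1/2) ^ (-(d:ℝ) - 1) := by positivity
        linarith

lemma aux_fourier_scale (d : ℕ) (φ : EuclideanSpace ℝ (Fin d) → ℝ) {t : ℝ} (ht : 0 < t)
    (ξ : EuclideanSpace ℝ (Fin d)) :
    𝓕 (fun y => ((t ^ (-(d : ℝ)) * φ (t⁻¹ • y) : ℝ) : ℂ)) ξ = 𝓕 (fun y => (φ y : ℂ)) (t • ξ) := by
  rw [Real.fourier_eq', Real.fourier_eq']
  have h := Measure.integral_comp_inv_smul_of_nonneg volume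
    (fun y : EuclideanSpace ℝ (Fin d) => Complex.exp (↑(-2 * Real.pi * inner ℝ y (t • ξ)) * Complex.I) • (φ y : ℂ)) ht.le
  rw [finrank_euclideanSpace, Fintype.card_fin] at h
  have h' : ∀ z : ℂ, z = ((t ^ (-(d : ℝ)) : ℝ) : ℂ) * (t ^ d • z) := by
    intro z
    rw [Complex.real_smul, ← mul_assoc, ← Complex.ofReal_mul, Real.rpow_neg ht.le, Real.rpow_natCast,
      inv_mul_cancel₀ (by positivity)]
    simp
  rw [h' (∫ v, Complex.exp (↑(-2 * Real.pi * inner ℝ v (t • ξ)) * Complex.I) • (φ v : ℂ)), ← h, ← integral_const_mul]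
  congr 1
  ext y
  rw [inner_smul_left, inner_smul_right]
  have : (starRingEnd ℝ) t⁻¹ * (t * inner ℝ y ξ) = inner ℝ y ξ := by
    simp [ht.ne']
  rw [this]
  push_cast
  simp only [smul_eq_mul]
  ring

lemma aux_half_scale (d : ℕ) (φ : EuclideanSpace ℝ (Fin d) → ℝ) {t : ℝ} (ht : 0 < t)
    (x : EuclideanSpace ℝ (Fin d)) :
    𝓕⁻ (fun ξ : EuclideanSpace ℝ (Fin d) => (‖ξ‖ : ℂ) * 𝓕 (fun y => ((t ^ (-(d : ℝ)) * φ (t⁻¹ • y) : ℝ) : ℂ)) ξ) x =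
    ((t ^ (-(d:ℝ) - 1) : ℝ) : ℂ) *
     𝓕⁻ (fun ξ : EuclideanSpace ℝ (Fin d) => (‖ξ‖ : ℂ) * 𝓕 (fun y => (φ y : ℂ)) ξ) (t⁻¹ • x) := by
  simp_rw [aux_fourier_scale d φ ht]
  rw [Real.fourierInv_eq', Real.fourierInv_eq']
  have h := Measure.integral_comp_smul_of_nonneg volume
    (fun ξ : EuclideanSpace ℝ (Fin d) => Complex.exp (↑(2 * Real.pi * inner ℝ ξ (t⁻¹ • x)) * Complex.I) • ((‖ξ‖ : ℂ) * 𝓕 (fun y => (φ y : ℂ)) ξ)) t (hR := ht.le)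
  rw [finrank_euclideanSpace, Fintype.card_fin] at h
  have h' : ∀ z : ℂ, ((t ^ (-(d : ℝ) - 1) : ℝ) : ℂ) * z = ((t⁻¹ : ℝ) : ℂ) * ((t ^ d)⁻¹ • z) := by
    intro z
    rw [Complex.real_smul, ← mul_assoc, ← Complex.ofReal_mul, sub_eq_add_neg, Real.rpow_add ht, Real.rpow_neg ht.le, Real.rpow_natCast,
      Real.rpow_neg_one, mul_comm t⁻¹]
  rw [h', ← h, ← integral_const_mul]
  congr 1
  ext ξ
  rw [inner_smul_left, inner_smul_right, norm_smul, Real.norm_of_nonneg ht.le]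
  have : (starRingEnd ℝ) t * (t⁻¹ * inner ℝ ξ x) = inner ℝ ξ x := by
    simp [ht.ne']
  rw [this]
  have ht' : (t : ℂ) ≠ 0 := by exact_mod_cast ht.ne'
  push_cast
  simp only [smul_eq_mul]
  field_simp

/-- uniform decay for dilations `φ_t(x) = t^{-d} φ(x/t)`. -/
theorem halfLaplacian_dilation_decay (d : ℕ) (hd : 2 ≤ d) (φ : EuclideanSpace ℝ (Fin d) → ℝ)
    (hφ : ContDiff ℝ (⊤ : ℕ∞) φ) (hsupp : HasCompactSupport φ) :
    ∃ C : ℝ, 0 < C ∧ ∀ t : ℝ, 0 < t → ∀ x : EuclideanSpace ℝ (Fin d),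
      |halfLaplacian d (fun y => t ^ (-(d : ℝ)) * φ (t⁻¹ • y)) x| ≤
        C * (t + ‖x‖) ^ (-(d : ℝ) - 1) := by
  have h1 : HasCompactSupport (fun y => (φ y : ℂ)) := hsupp.comp_left (g := fun r : ℝ => (r : ℂ)) (by simp)
  have h2 : ContDiff ℝ (⊤ : ℕ∞) (fun y => (φ y : ℂ)) := Complex.ofRealCLM.contDiff.comp hφ
  obtain ⟨R, hR⟩ := hsupp.isCompact.isBounded.subset_closedBall 0
  obtain ⟨C, hC, H⟩ := aux_single d (h1.toSchwartzMap h2) (le_max_left 1 R) (by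
    intro y hy
    have : φ y = 0 := by
      by_contra hne
      have := hR (subset_tsupport _ hne)
      rw [mem_closedBall_zero_iff] at this
      have := lt_of_le_of_lt (le_max_right 1 R) hy
      linarith
    simp [this])
  refine ⟨C, hC, fun t ht x => ?_⟩
  have H' : ‖𝓕⁻ (fun ξ : EuclideanSpace ℝ (Fin d) => (‖ξ‖ : ℂ) * 𝓕 (fun y => (φ y : ℂ)) ξ) (t⁻¹ • x)‖ ≤
      C * (1 + ‖t⁻¹ • x‖) ^ (-(d:ℝ) - 1) := H (t⁻¹ • x)
  unfold halfLaplacian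
  refine (Complex.abs_re_le_norm _).trans ?_
  rw [aux_half_scale d φ ht, norm_mul, Complex.norm_real, Real.norm_of_nonneg (by positivity)]
  calc _ ≤ t ^ (-(d:ℝ) - 1) * (C * (1 + ‖t⁻¹ • x‖) ^ (-(d:ℝ) - 1)) := by gcongr
    _ = C * (t ^ (-(d:ℝ) - 1) * (1 + ‖t⁻¹ • x‖) ^ (-(d:ℝ) - 1)) := by ring
    _ = _ := by
      rw [← Real.mul_rpow ht.le (by positivity), norm_smul, norm_inv, Real.norm_of_nonneg ht.le]
      congr 2
      field_simp
end
end

section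
/- Gustin's boxing inequality: if ω is an open bounded subset of ℝ^d (d ≥ 2) with smooth boundary, then H^{d-1}_∞(ω) ≤ C·H^{d-1}(∂ω), where C depends only on d. -/
open MeasureTheory Real Metric Set
open scoped FourierTransform ENNReal
noncomputable section

def hyb {d : ℕ} (k : ℕ) (p : (Fin d → ℝ) × (Fin d → ℝ)) : Fin d → ℝ :=
  fun j => if j.val < k then p.2 j else p.1 j

lemma measurable_hyb {d : ℕ} (k : ℕ) : Measurable (hyb (d := d) k) := by
  refine measurable_pi_iff.2 fun j => ?_
  unfold hyb
  by_cases h : j.val < k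
  · simp only [h, if_true]; fun_prop
  · simp only [h, if_false]; fun_prop

lemma map_hyb {d : ℕ} (μ : Fin d → Measure ℝ) [∀ i, IsFiniteMeasure (μ i)]
    (h0 : ∀ i, μ i univ ≠ 0) (k : ℕ) :
    ((Measure.pi μ).prod (Measure.pi μ)).map (hyb k) = (∏ i, μ i univ) • Measure.pi μ := by
  have hc0 : (∏ i, μ i univ) ≠ 0 := Finset.prod_ne_zero_iff.2 fun i _ => h0 i
  have hct : (∏ i, μ i univ) ≠ ⊤ := ENNReal.prod_ne_top fun i _ => measure_ne_top _ _
  have key : (∏ i, μ i univ)⁻¹ • ((Measure.pi μ).prod (Measure.pi μ)).map (hyb k)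
      = Measure.pi μ := by
    symm
    refine Measure.pi_eq fun s hs => ?_
    rw [Measure.smul_apply, Measure.map_apply (measurable_hyb k) (MeasurableSet.univ_pi hs)]
    have : hyb k ⁻¹' (univ.pi s) = (univ.pi fun j : Fin d => if j.val < k then univ else s j) ×ˢ
        (univ.pi fun j : Fin d => if j.val < k then s j else univ) := by
      ext ⟨x, y⟩
      simp only [hyb, mem_preimage, mem_pi, mem_univ, true_imp_iff, mem_prod, ← forall_and]
      refine forall_congr' fun j => ?_
      split_ifs <;> simp
    rw [this, Measure.prod_prod, Measure.pi_pi, Measure.pi_pi, ← Finset.prod_mul_distrib]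
    have : ∀ j : Fin d, μ j (if j.val < k then univ else s j) * μ j (if j.val < k then s j else univ)
        = μ j univ * μ j (s j) := by
      intro j
      split_ifs
      · rfl
      · rw [mul_comm]
    rw [Finset.prod_congr rfl fun j _ => this j, Finset.prod_mul_distrib, smul_eq_mul, ← mul_assoc,
      ENNReal.inv_mul_cancel hc0 hct, one_mul]
  rw [← key, smul_smul, ENNReal.mul_inv_cancel hc0 hct, one_smul]
  rw [key]

lemma seg_frontier {E : Type*} [NormedAddCommGroup E] [NormedSpace ℝ E] {A : Set E} (hA : IsOpen A)
    {x y : E} (hx : x ∈ A) (hy : y ∉ A) : ∃ w ∈ segment ℝ x y, w ∈ frontier A := by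
  by_contra! h
  have hc : IsPreconnected (segment ℝ x y) := (convex_segment x y).isPreconnected
  have := hc A (closure A)ᶜ hA isClosed_closure.isOpen_compl ?_ ⟨x, left_mem_segment ℝ x y, hx⟩ ?_
  · obtain ⟨z, _, h1, h2⟩ := this
    exact h2 (subset_closure h1)
  · intro z hz
    by_cases h1 : z ∈ A
    · exact Or.inl h1
    · right
      intro h2
      exact h z hz ⟨h2, by rwa [hA.interior_eq]⟩
  · refine ⟨y, right_mem_segment ℝ x y, fun h2 => h y (right_mem_segment ℝ x y) ⟨h2, by rwa [hA.interior_eq]⟩⟩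

lemma vol_slab {n : ℕ} (c : Fin (n+1) → ℝ) (r : ℝ) (i : Fin (n+1))
    (P : Set (Fin n → ℝ)) (hP : MeasurableSet P) :
    volume (closedBall c r ∩ {z | i.removeNth z ∈ P}) ≤ ENNReal.ofReal (2 * r) * volume P := by
  have hsub : closedBall c r ∩ {z | i.removeNth z ∈ P} ⊆
     (MeasurableEquiv.piFinSuccAbove (fun _ => ℝ) i) ⁻¹' (closedBall (c i) r ×ˢ P) := by
    rintro z ⟨hz, hz2⟩
    refine ⟨?_, hz2⟩
    have := (dist_le_pi_dist z c i).trans (mem_closedBall.1 hz)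
    exact this
  refine (measure_mono hsub).trans ?_
  rw [(volume_preserving_piFinSuccAbove (fun _ => ℝ) i).measure_preimage
    (measurableSet_closedBall.prod hP).nullMeasurableSet, Measure.volume_eq_prod, Measure.prod_prod,
    Real.volume_closedBall]

lemma vol_proj {n : ℕ} (F : Set (Fin (n+1) → ℝ)) (i : Fin (n+1)) :
    volume ((fun z => i.removeNth z) '' F : Set (Fin n → ℝ)) ≤ μH[(n:ℝ)] F := by
  have h : LipschitzWith 1 (fun z : Fin (n+1) → ℝ => (i.removeNth z : Fin n → ℝ)) := by
    refine LipschitzWith.of_dist_le_mul fun x y => ?_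
    rw [NNReal.coe_one, one_mul, dist_pi_le_iff dist_nonneg]
    exact fun j => dist_le_pi_dist x y _
  have := h.hausdorffMeasure_image_le (d := n) (by positivity) F
  rw [← hausdorffMeasure_pi_real, Fintype.card_fin]
  simpa using this

lemma rel_isop {n : ℕ} (A : Set (Fin (n+1) → ℝ)) (hA : IsOpen A) (c : Fin (n+1) → ℝ) (r : ℝ)
    (hr : 0 < r) :
    volume (A ∩ closedBall c r) * volume (closedBall c r \ A) ≤
      volume (closedBall c r) * ((n + 1 : ℕ) * (ENNReal.ofReal (2 * r) *
        μH[(n:ℝ)] (frontier A ∩ closedBall c r))) := by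
  set Q := closedBall c r with hQ
  set μ : Fin (n+1) → Measure ℝ := fun i => volume.restrict (closedBall (c i) r) with hμ
  have hM : Measure.pi μ = volume.restrict Q := by
    rw [hQ, closedBall_pi c hr.le, volume_pi, Measure.restrict_pi_pi]
  have hMuniv : ∏ i, μ i univ = volume Q := by
    rw [← Measure.pi_univ, hM, Measure.restrict_apply_univ]
  have h0 : ∀ i, μ i univ ≠ 0 := by
    intro i
    simp [hμ, hr]
  have : ∀ i, IsFiniteMeasure (μ i) := by
    intro i
    exact ⟨by simpa [hμ] using ENNReal.mul_lt_top (by simp) (by simp)⟩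
  set M := Measure.pi μ with hMdef
  let P : Fin (n+1) → Set (Fin n → ℝ) := fun i => (fun z => i.removeNth z) '' (frontier A ∩ Q)
  have hPm : ∀ i, MeasurableSet (P i) := by
    intro i
    have hcpt : IsCompact (frontier A ∩ Q) := (isCompact_closedBall c r).inter_left isClosed_frontier
    refine (hcpt.image ?_).measurableSet
    exact continuous_pi fun j => continuous_apply _
  let E : Fin (n+1) → Set (Fin (n+1) → ℝ) := fun i => Q ∩ {z | i.removeNth z ∈ P i}
  have hEm : ∀ i, MeasurableSet (E i) := by
    intro i
    refine measurableSet_closedBall.inter ?_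
    exact (hPm i).preimage (measurable_pi_iff.2 fun j => measurable_pi_apply _)
  have hhQ : ∀ x ∈ Q, ∀ y ∈ Q, ∀ k, hyb k (x, y) ∈ Q := by
    intro x hx y hy k
    rw [hQ, closedBall_pi c hr.le] at *
    intro j hj
    simp only [hyb]
    split_ifs
    · exact hy j hj
    · exact hx j hj
  have hsub : (A ∩ Q) ×ˢ (Q \ A) ⊆ ⋃ i : Fin (n+1), hyb i.val ⁻¹' (E i) := by
    rintro ⟨x, y⟩ ⟨⟨hxA, hxQ⟩, ⟨hyQ, hyA⟩⟩
    simp only at hxA hxQ hyQ hyA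
    have hz0 : hyb 0 (x, y) = x := by ext j; simp [hyb]
    have hz1 : hyb (n+1) (x, y) = y := by ext j; simp only [hyb, j.isLt, if_true]
    have : ∃ k < n + 1, hyb k (x,y) ∈ A ∧ hyb (k+1) (x,y) ∉ A := by
      by_contra! h
      have : ∀ k ≤ n + 1, hyb k (x,y) ∈ A := by
        intro k
        induction k with
        | zero => intro _; rwa [hz0]
        | succ k ih => intro hk; exact h k (by omega) (ih (by omega))
      exact hyA (hz1 ▸ this (n+1) le_rfl)
    obtain ⟨k, hk, h1, h2⟩ := this
    refine mem_iUnion.2 ⟨⟨k, hk⟩, hhQ x hxQ y hyQ k, ?_⟩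
    obtain ⟨w, hw, hwF⟩ := seg_frontier hA h1 h2
    have hwQ : w ∈ Q := (convex_closedBall c r).segment_subset (hhQ x hxQ y hyQ k)
      (hhQ x hxQ y hyQ (k+1)) hw
    refine ⟨w, ⟨hwF, hwQ⟩, ?_⟩
    obtain ⟨a, b, ha, hb, hab, rfl⟩ := hw
    ext j
    simp only [Fin.removeNth]
    set i : Fin (n+1) := (⟨k, hk⟩ : Fin (n+1)).succAbove j with hi
    have hne : i.val ≠ k := by
      intro h
      exact Fin.succAbove_ne ⟨k, hk⟩ j (Fin.ext h)
    have : hyb (k+1) (x,y) i = hyb k (x,y) i := by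
      have : i.val < k + 1 ↔ i.val < k := by omega
      simp only [hyb, this]
    simp only [Pi.add_apply, Pi.smul_apply, smul_eq_mul, this]
    rw [← add_mul, hab, one_mul]
  have hm1 : M (A ∩ Q) = volume (A ∩ Q) := by
    rw [hM, Measure.restrict_apply (hA.measurableSet.inter measurableSet_closedBall)]
    congr 1; ext z; simp only [mem_inter_iff]; tauto
  have hm2 : M (Q \ A) = volume (Q \ A) := by
    rw [hM, Measure.restrict_apply (measurableSet_closedBall.diff hA.measurableSet)]
    congr 1; ext z; simp only [mem_inter_iff, mem_sdiff]; tauto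
  have hE : ∀ i : Fin (n+1), (M.prod M) (hyb i.val ⁻¹' (E i)) ≤
      volume Q * (ENNReal.ofReal (2 * r) * μH[(n:ℝ)] (frontier A ∩ Q)) := by
    intro i
    rw [← Measure.map_apply (measurable_hyb _) (hEm i), map_hyb μ h0, Measure.smul_apply, hMuniv,
      smul_eq_mul]
    gcongr
    rw [← hMdef, hM]
    refine (Measure.restrict_apply_le _ _).trans ?_
    refine (vol_slab c r i (P i) (hPm i)).trans ?_
    gcongr
    exact vol_proj _ i
  rw [← hm1, ← hm2, ← Measure.prod_prod]
  refine (measure_mono hsub).trans ((measure_iUnion_fintype_le _ _).trans ?_)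
  refine (Finset.sum_le_sum fun i _ => hE i).trans ?_
  rw [Finset.sum_const, Finset.card_univ, Fintype.card_fin, nsmul_eq_mul, mul_left_comm]

lemma scale_exists {n : ℕ} (A : Set (Fin (n+1) → ℝ)) (hA : IsOpen A) (hb : Bornology.IsBounded A)
    (x : Fin (n+1) → ℝ) (hx : x ∈ A) :
    ∃ r : ℝ, 0 < r ∧ r ≤ 1 + 2 * volume.real A ∧
      ENNReal.ofReal (r ^ n) ≤ ENNReal.ofReal (8 * (n + 1)) *
        μH[(n:ℝ)] (frontier A ∩ closedBall x r) := by
  obtain ⟨r0, hr0, hsub⟩ := Metric.nhds_basis_closedBall.mem_iff.1 (hA.mem_nhds hx)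
  have hfin : volume A ≠ ⊤ := hb.measure_lt_top.ne
  have hvol : ∀ r : ℝ, 0 < r → volume.real (closedBall x r) = (2 * r) ^ (n+1) := by
    intro r hr
    rw [measureReal_def, Real.volume_pi_closedBall x hr.le, Fintype.card_fin,
      ENNReal.toReal_ofReal (by positivity)]
  let p : ℕ → Prop := fun k => volume.real (A ∩ closedBall x (2 ^ k * r0)) ≤ (2 * (2 ^ k * r0)) ^ (n+1) / 2
  have hex : ∃ k, p k := by
    obtain ⟨k, hk⟩ := pow_unbounded_of_one_lt (2 * volume.real A / (2 * r0) ^ (n+1)) one_lt_two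
    refine ⟨k, ?_⟩
    have h1 : volume.real (A ∩ closedBall x (2 ^ k * r0)) ≤ volume.real A :=
      measureReal_mono inter_subset_left hfin
    have h2 : (2 : ℝ) ^ k ≤ (2 ^ k) ^ (n+1) := le_self_pow₀ (one_le_pow₀ one_le_two) (by simp)
    rw [div_lt_iff₀ (by positivity)] at hk
    have h3 : (2:ℝ) ^ k * (2 * r0) ^ (n+1) ≤ (2 * (2 ^ k * r0)) ^ (n+1) := by
      calc _ ≤ ((2:ℝ) ^ k) ^ (n+1) * (2 * r0) ^ (n+1) := by gcongr
        _ = _ := by rw [← mul_pow]; ring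
    change _ ≤ _
    linarith
  classical
  have hp := Nat.find_spec hex
  have hmin := fun m => Nat.find_min hex (m := m)
  set k := Nat.find hex
  have hk0 : k ≠ 0 := by
    intro h0
    rw [h0] at hp
    change _ ≤ _ at hp
    rw [pow_zero, one_mul, inter_eq_self_of_subset_right hsub, hvol _ hr0] at hp
    have : 0 < (2 * r0) ^ (n+1) := by positivity
    linarith
  obtain ⟨m, hm⟩ := Nat.exists_eq_succ_of_ne_zero hk0
  have hq : ¬ p m := hmin m (by omega)
  rw [hm] at hp
  set r := (2:ℝ) ^ (m+1) * r0 with hr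
  have hrpos : 0 < r := by positivity
  have hr2 : 2 * ((2:ℝ) ^ m * r0) = r := by rw [hr]; ring
  have hp' : volume.real (A ∩ closedBall x r) ≤ (2 * r) ^ (n+1) / 2 := hp
  have hq' : r ^ (n+1) / 2 < volume.real (A ∩ closedBall x ((2:ℝ) ^ m * r0)) := by
    have := not_le.1 hq
    rwa [hr2] at this
  have hrr : (2:ℝ) ^ m * r0 ≤ r := by rw [← hr2]; linarith [show 0 < (2:ℝ) ^ m * r0 by positivity]
  have hq1 : r ^ (n+1) / 2 < volume.real A :=
    hq'.trans_le (measureReal_mono inter_subset_left hfin)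
  have hfin2 : volume (A ∩ closedBall x r) ≠ ⊤ := measure_ne_top_of_subset inter_subset_left hfin
  have hq2 : r ^ (n+1) / 2 < volume.real (A ∩ closedBall x r) :=
    hq'.trans_le (measureReal_mono (inter_subset_inter_right _ (closedBall_subset_closedBall hrr)) hfin2)
  refine ⟨r, hrpos, ?_, ?_⟩
  · by_contra! h
    have h0 : 0 ≤ volume.real A := measureReal_nonneg
    have : r ≤ r ^ (n+1) := le_self_pow₀ (by linarith) (by simp)
    linarith
  · have key := rel_isop A hA x r hrpos
    by_cases htop : μH[(n:ℝ)] (frontier A ∩ closedBall x r) = ⊤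
    · rw [htop, ENNReal.mul_top]
      · exact le_top
      · have : (0:ℝ) < 8 * (n+1) := by positivity
        simpa using this
    · set h := μH[(n:ℝ)] (frontier A ∩ closedBall x r)
      have hdiff : volume.real (closedBall x r \ A) = (2*r)^(n+1) - volume.real (A ∩ closedBall x r) := by
        rw [← hvol r hrpos, ← measureReal_inter_add_sdiff (s := closedBall x r) hA.measurableSet
          (measure_closedBall_lt_top.ne), inter_comm]
        ring
      have key2 := ENNReal.toReal_mono (ENNReal.mul_ne_top measure_closedBall_lt_top.ne
        (ENNReal.mul_ne_top (ENNReal.natCast_ne_top _) (ENNReal.mul_ne_top ENNReal.ofReal_ne_top htop))) key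
      simp only [ENNReal.toReal_mul, ← measureReal_def, ENNReal.toReal_natCast] at key2
      rw [hdiff, hvol r hrpos, ENNReal.toReal_ofReal (by positivity)] at key2
      have hv : 0 < (2*r)^(n+1) := by positivity
      have h3 : r^(n+1) / 2 * ((2*r)^(n+1)/2) ≤ (2 * r) ^ (n + 1) * (((n + 1 : ℕ):ℝ) * (2 * r * h.toReal)) := by
        refine le_trans ?_ key2
        have aux : ∀ v a : ℝ, a ≤ v / 2 → v / 2 ≤ v - a := fun v a h => by linarith
        exact mul_le_mul hq2.le (aux _ _ hp') (by positivity) measureReal_nonneg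
      have h4 : r ^ (n+1) / 4 ≤ (n+1) * (2 * r * h.toReal) := by
        push_cast at h3
        refine le_of_mul_le_mul_left ?_ hv
        linarith
      have h5 : r ^ n ≤ 8 * (n+1) * h.toReal := by
        refine le_of_mul_le_mul_left ?_ hrpos
        rw [pow_succ] at h4
        linarith
      calc ENNReal.ofReal (r ^ n) ≤ ENNReal.ofReal (8 * (n+1) * h.toReal) := ENNReal.ofReal_le_ofReal h5
        _ = _ := by rw [ENNReal.ofReal_mul (by positivity), ENNReal.ofReal_toReal htop]

lemma boxing_sup {n : ℕ} (A : Set (Fin (n+1) → ℝ)) (hA : IsOpen A) (hb : Bornology.IsBounded A) :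
    ∃ (u : Set (Fin (n+1) → ℝ)) (r : (Fin (n+1) → ℝ) → ℝ), u.Countable ∧ (∀ a ∈ u, 0 < r a) ∧
      (A ⊆ ⋃ a ∈ u, closedBall a (5 * r a)) ∧
      ∑' a : u, ENNReal.ofReal (r a ^ n) ≤ ENNReal.ofReal (8 * (n + 1)) * μH[(n:ℝ)] (frontier A) := by
  choose! r hr0 hrR hrH using scale_exists A hA hb
  obtain ⟨u, huA, hdisj, hcov⟩ := Vitali.exists_disjoint_subfamily_covering_enlargement_closedBall
    A id r _ hrR 5 (by norm_num)
  have hcount : u.Countable := by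
    refine hdisj.countable_of_nonempty_interior fun a ha => ?_
    exact ⟨a, ball_subset_interior_closedBall (mem_ball_self (hr0 a (huA ha)))⟩
  refine ⟨u, r, hcount, fun a ha => hr0 a (huA ha), ?_, ?_⟩
  · intro x hx
    obtain ⟨b, hbu, hb2⟩ := hcov x hx
    exact mem_iUnion₂.2 ⟨b, hbu, hb2 (mem_closedBall_self (hr0 x hx).le)⟩
  · have : Countable u := hcount
    calc _ ≤ ∑' a : u, ENNReal.ofReal (8 * (n + 1)) * μH[(n:ℝ)] (frontier A ∩ closedBall a.1 (r a)) :=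
          ENNReal.tsum_le_tsum fun a => hrH a (huA a.2)
      _ = ENNReal.ofReal (8 * (n + 1)) * μH[(n:ℝ)] (⋃ a : u, frontier A ∩ closedBall a.1 (r a)) := by
          rw [ENNReal.tsum_mul_left, measure_iUnion]
          · intro a b hab
            exact (hdisj a.2 b.2 (fun h => hab (Subtype.ext h))).mono inter_subset_right inter_subset_right
          · exact fun a => isClosed_frontier.measurableSet.inter measurableSet_closedBall
      _ ≤ _ := by
          gcongr
          exact iUnion_subset fun a => inter_subset_left

lemma content_le_countable {d : ℕ} {α : ℝ} (hα : 0 < α) (ω : Set (EuclideanSpace ℝ (Fin d)))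
    {ι : Type*} [Countable ι] (c : ι → EuclideanSpace ℝ (Fin d)) (r : ι → ℝ) (hr : ∀ i, 0 < r i)
    (hcov : ω ⊆ ⋃ i, closedBall (c i) (r i)) :
    hausdorffContent d α ω ≤ ∑' i, ENNReal.ofReal (r i ^ α) := by
  refine ENNReal.le_of_forall_pos_le_add fun ε hε _ => ?_
  obtain ⟨δ, hδ, hsum⟩ := ENNReal.exists_pos_sum_of_countable (ε := ε) (by simpa using hε.ne') ℕ
  obtain ⟨e⟩ : Nonempty (ℕ ≃ ι ⊕ ℕ) := nonempty_equiv_of_countable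
  let c' : ι ⊕ ℕ → EuclideanSpace ℝ (Fin d) := Sum.elim c (fun _ => 0)
  let r' : ι ⊕ ℕ → ℝ := Sum.elim r (fun j => (δ j : ℝ) ^ α⁻¹)
  have hr' : ∀ i, 0 < r' i := by
    rintro (i | j)
    · exact hr i
    · exact Real.rpow_pos_of_pos (by exact_mod_cast hδ j) _
  have hcov' : ω ⊆ ⋃ j, closedBall (c' (e j)) (r' (e j)) := by
    intro x hx
    obtain ⟨i, hi⟩ := mem_iUnion.1 (hcov hx)
    refine mem_iUnion.2 ⟨e.symm (Sum.inl i), ?_⟩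
    simpa [c', r'] using hi
  have h1 : hausdorffContent d α ω ≤ ∑' j, ENNReal.ofReal (r' (e j) ^ α) :=
    iInf_le_of_le (fun j => c' (e j)) <| iInf_le_of_le (fun j => r' (e j)) <|
      iInf_le_of_le (fun j => hr' _) <| iInf_le_of_le hcov' le_rfl
  refine h1.trans ?_
  rw [e.tsum_eq (fun i => ENNReal.ofReal (r' i ^ α)),
    Summable.tsum_sum ENNReal.summable ENNReal.summable]
  refine add_le_add le_rfl ?_
  refine le_trans (le_of_eq ?_) hsum.le
  congr 1; ext j
  simp only [r', Sum.elim_inr]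
  rw [← Real.rpow_mul (NNReal.coe_nonneg _), inv_mul_cancel₀ hα.ne', Real.rpow_one, ENNReal.ofReal_coe_nnreal]

/-- Gustin's boxing inequality. Smooth boundary is encoded via local
smooth defining functions with nonvanishing derivative. -/
theorem gustin_boxing (d : ℕ) (hd : 2 ≤ d) :
    ∃ C : ℝ≥0∞, 0 < C ∧ C < ⊤ ∧ ∀ ω : Set (EuclideanSpace ℝ (Fin d)),
      IsOpen ω → Bornology.IsBounded ω →
      (∀ x ∈ frontier ω, ∃ U : Set (EuclideanSpace ℝ (Fin d)), IsOpen U ∧ x ∈ U ∧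
        ∃ f : EuclideanSpace ℝ (Fin d) → ℝ, ContDiff ℝ (⊤ : ℕ∞) f ∧
          (∀ y ∈ U, fderiv ℝ f y ≠ 0) ∧ ω ∩ U = {y ∈ U | f y < 0}) →
      hausdorffContent d ((d : ℝ) - 1) ω ≤ C * μH[(d : ℝ) - 1] (frontier ω) := by
  obtain ⟨n, rfl⟩ : ∃ n, d = n + 1 := ⟨d - 1, by omega⟩
  have hn : 1 ≤ n := by omega
  have hcast : (((n + 1 : ℕ) : ℝ) - 1) = (n : ℝ) := by push_cast; ring
  rw [hcast]
  have hC : (0:ℝ) < (5 * (n+1)) ^ n * (8 * (n+1)) := by positivity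
  refine ⟨ENNReal.ofReal ((5 * (n+1)) ^ n * (8 * (n+1))), by simpa using hC, ENNReal.ofReal_lt_top, ?_⟩
  intro ω hω hb _
  let e : EuclideanSpace ℝ (Fin (n+1)) ≃ₜ (Fin (n+1) → ℝ) :=
    (EuclideanSpace.equiv (Fin (n+1)) ℝ).toHomeomorph
  have he : ∀ x, e x = x.ofLp := fun x => rfl
  have hlip : LipschitzWith 1 e := PiLp.lipschitzWith_ofLp 2 _
  have hdist : ∀ x y, dist x y ≤ (n+1) * dist (e x) (e y) := by
    intro x y
    rw [EuclideanSpace.dist_eq]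
    refine Real.sqrt_le_iff.2 ⟨by positivity, ?_⟩
    calc _ ≤ ∑ i : Fin (n+1), dist (e x) (e y) ^ 2 := by
          gcongr with i
          exact dist_le_pi_dist (e x) (e y) i
      _ = (n+1) * dist (e x) (e y) ^ 2 := by simp
      _ ≤ _ := by
          rw [mul_pow]
          gcongr
          nlinarith [(Nat.cast_nonneg n : (0:ℝ) ≤ n)]
  obtain ⟨u, r, hu, hr, hcov, hsum⟩ := boxing_sup (e '' ω) (e.isOpenMap ω hω) (hlip.isBounded_image hb)
  have : Countable u := hu
  have h1 : hausdorffContent (n+1) n ω ≤ ∑' a : u, ENNReal.ofReal (((n+1) * (5 * r a)) ^ (n:ℝ)) := by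
    refine content_le_countable (by exact_mod_cast hn) ω (fun a : u => e.symm a) _
      (fun a => by have := hr a a.2; positivity) ?_
    intro x hx
    obtain ⟨a, ha, hxa⟩ := mem_iUnion₂.1 (hcov (mem_image_of_mem e hx))
    refine mem_iUnion.2 ⟨⟨a, ha⟩, ?_⟩
    rw [mem_closedBall] at hxa ⊢
    refine (hdist _ _).trans ?_
    rw [e.apply_symm_apply]
    gcongr
  have h2 : ∀ a : u, ENNReal.ofReal (((n+1) * (5 * r a)) ^ (n:ℝ)) =
      ENNReal.ofReal ((5 * (n+1)) ^ n) * ENNReal.ofReal (r a ^ n) := by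
    intro a
    rw [← ENNReal.ofReal_mul (by positivity), Real.rpow_natCast, ← mul_pow]
    congr 2; ring
  have h3 : μH[(n:ℝ)] (frontier (e '' ω)) ≤ μH[(n:ℝ)] (frontier ω) := by
    rw [← e.image_frontier]
    simpa using hlip.hausdorffMeasure_image_le (d := n) (by positivity) (frontier ω)
  refine h1.trans ?_
  simp_rw [h2]
  rw [ENNReal.tsum_mul_left, ENNReal.ofReal_mul (by positivity), mul_assoc]
  gcongr
  exact hsum.trans (by gcongr)
end
end

section
/- Let d ≥ 2 and f ∈ C_0^∞(ℝ^d) be real-valued. Then ∫_0^∞ H^{d-1}_∞({x : f(x) > t}) dt ≤ C ‖∇f‖_{L^1(ℝ^d)}, with C depending only on d. -/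
open MeasureTheory Real Metric Set
open scoped FourierTransform ENNReal
noncomputable section

lemma content_le {d : ℕ} {α : ℝ} (hα : 0 < α) {ι : Type*} [Countable ι] [Infinite ι]
    (ω : Set (EuclideanSpace ℝ (Fin d))) (S : Set ι)
    (c : ι → EuclideanSpace ℝ (Fin d)) (r : ι → ℝ) (hr : ∀ i, 0 < r i)
    (hω : ω ⊆ ⋃ i ∈ S, closedBall (c i) (r i)) :
    hausdorffContent d α ω ≤ ∑' i : S, ENNReal.ofReal (r i ^ α) := by
  classical
  refine ENNReal.le_of_forall_pos_le_add fun ε hε _ => ?_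
  obtain ⟨δ, hδ, hsum⟩ := ENNReal.exists_pos_sum_of_countable
    (ε := (ε : ℝ≥0∞)) (by exact_mod_cast hε.ne') ι
  obtain ⟨hden⟩ := nonempty_denumerable ι
  let e : ℕ ≃ ι := (Denumerable.eqv ι).symm
  let r' : ι → ℝ := fun i => if i ∈ S then r i else (δ i : ℝ) ^ (1 / α)
  have hr' : ∀ i, 0 < r' i := by
    intro i
    by_cases h : i ∈ S
    · simp [r', h, hr]
    · simp only [r', h, if_false]
      exact Real.rpow_pos_of_pos (by exact_mod_cast hδ i) _
  unfold hausdorffContent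
  refine le_trans (iInf_le_of_le (c ∘ e) (iInf_le_of_le (r' ∘ e) (iInf_le_of_le (fun j => hr' _)
    (iInf_le_of_le ?_ (le_refl (∑' j, ENNReal.ofReal ((r' ∘ e) j ^ α))))))) ?_
  · intro x hx
    obtain ⟨i, hi, hxi⟩ := by simpa only [mem_iUnion, exists_prop] using hω hx
    refine mem_iUnion.2 ⟨e.symm i, ?_⟩
    simpa [r', hi] using hxi
  · have : ∑' j, ENNReal.ofReal ((r' ∘ e) j ^ α) = ∑' i, ENNReal.ofReal (r' i ^ α) :=
      e.tsum_eq (fun i => ENNReal.ofReal (r' i ^ α))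
    rw [this, tsum_subtype S (fun i => ENNReal.ofReal (r i ^ α))]
    refine le_trans ?_ (add_le_add_right hsum.le _)
    rw [← ENNReal.tsum_add]
    refine ENNReal.tsum_le_tsum fun i => ?_
    by_cases h : i ∈ S
    · simp [r', h]
    · simp only [r', h, if_false, not_false_eq_true, indicator_of_notMem, zero_add]
      rw [← Real.rpow_mul (by positivity), one_div, inv_mul_cancel₀ hα.ne', Real.rpow_one]
      simp

/-- Dyadic cubes. -/
def dyCube {d : ℕ} (p : ℤ × (Fin d → ℤ)) : Set (EuclideanSpace ℝ (Fin d)) :=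
  {x | ∀ i, ⌊x i / (2 : ℝ) ^ p.1⌋ = p.2 i}

lemma floor_nested {m m' : ℤ} (h : m ≤ m') {x y : ℝ}
    (hxy : ⌊x / (2 : ℝ) ^ m⌋ = ⌊y / (2 : ℝ) ^ m⌋) :
    ⌊x / (2 : ℝ) ^ m'⌋ = ⌊y / (2 : ℝ) ^ m'⌋ := by
  obtain ⟨k, rfl⟩ := Int.le.dest h
  have key : ∀ z : ℝ, ⌊z / (2 : ℝ) ^ (m + (k : ℤ))⌋ = ⌊z / (2 : ℝ) ^ m⌋ / ((2 ^ k : ℕ) : ℤ) := by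
    intro z
    rw [← Int.floor_div_natCast, zpow_add₀ (by norm_num), div_div]
    simp
  rw [key, key, hxy]

lemma dyCube_nested {d : ℕ} {p q : ℤ × (Fin d → ℤ)} (h : p.1 ≤ q.1)
    {x : EuclideanSpace ℝ (Fin d)} (hp : x ∈ dyCube p) (hq : x ∈ dyCube q) :
    dyCube p ⊆ dyCube q := by
  intro y hy i
  rw [← hq i]
  exact floor_nested h ((hy i).trans (hp i).symm)

lemma mem_dyCube_iff {d : ℕ} {p : ℤ × (Fin d → ℤ)} {x : EuclideanSpace ℝ (Fin d)} :
    x ∈ dyCube p ↔ ∀ i, x i ∈ Ico (p.2 i * (2 : ℝ) ^ p.1) ((p.2 i + 1) * (2 : ℝ) ^ p.1) := by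
  refine forall_congr' fun i => ?_
  have h2 : (0 : ℝ) < 2 ^ p.1 := by positivity
  rw [Int.floor_eq_iff, le_div_iff₀ h2, div_lt_iff₀ h2, mem_Ico]

lemma dyCube_eq_preimage {d : ℕ} (p : ℤ × (Fin d → ℤ)) :
    dyCube p = (fun x i => x i) ⁻¹'
      (Set.pi univ fun i => Ico (p.2 i * (2 : ℝ) ^ p.1) ((p.2 i + 1) * (2 : ℝ) ^ p.1)) := by
  ext x
  rw [mem_dyCube_iff]
  simp

lemma measurableSet_dyCube {d : ℕ} (p : ℤ × (Fin d → ℤ)) : MeasurableSet (dyCube p) := by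
  rw [dyCube_eq_preimage]
  exact (PiLp.volume_preserving_ofLp (Fin d)).measurable
    (MeasurableSet.univ_pi fun i => measurableSet_Ico)

lemma volume_dyCube {d : ℕ} (p : ℤ × (Fin d → ℤ)) :
    volume (dyCube p) = ENNReal.ofReal ((2 : ℝ) ^ p.1) ^ d := by
  rw [dyCube_eq_preimage, show (fun (x : EuclideanSpace ℝ (Fin d)) i => x i) = WithLp.ofLp from rfl,
    (PiLp.volume_preserving_ofLp (Fin d)).measure_preimage
      (MeasurableSet.univ_pi fun i => measurableSet_Ico).nullMeasurableSet, Real.volume_pi_Ico]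
  simp [add_mul]

lemma convex_dyCube {d : ℕ} (p : ℤ × (Fin d → ℤ)) : Convex ℝ (dyCube p) := by
  intro x hx y hy a b ha hb hab
  rw [mem_dyCube_iff] at *
  intro i
  exact (convex_Ico _ _) (hx i) (hy i) ha hb hab

lemma norm_sub_le_dyCube {d : ℕ} (p : ℤ × (Fin d → ℤ)) {x y : EuclideanSpace ℝ (Fin d)}
    (hx : x ∈ dyCube p) (hy : y ∈ dyCube p) : ‖x - y‖ ≤ d * (2 : ℝ) ^ p.1 := by
  rw [mem_dyCube_iff] at *
  have h1 : ‖x - y‖ ≤ ∑ i, ‖(x - y) i‖ := by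
    rw [EuclideanSpace.norm_eq]
    refine Real.sqrt_le_iff.2 ⟨by positivity, ?_⟩
    exact Finset.sum_sq_le_sq_sum_of_nonneg (fun i _ => norm_nonneg _)
  refine h1.trans ?_
  calc _ ≤ ∑ i : Fin d, (2 : ℝ) ^ p.1 := by
        refine Finset.sum_le_sum fun i _ => ?_
        have := hx i
        have := hy i
        simp only [mem_Ico] at *
        rw [PiLp.sub_apply, Real.norm_eq_abs, abs_le]
        constructor <;> linarith
    _ = _ := by simp

lemma exists_step {X : Type*} [AddCommGroup X] [Module ℝ X] (E Q : Set X) (hQ : Convex ℝ Q)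
    (L : ℕ) (hL : 0 < L) (x h : X) (hx : x ∈ E ∩ Q) (hy : x + (L : ℝ) • h ∈ Q \ E) :
    ∃ i < L, x + (i : ℝ) • h ∈ E ∩ Q ∧ x + (i : ℝ) • h + h ∉ E := by
  have hmem : ∀ i ≤ L, x + (i : ℝ) • h ∈ Q := by
    intro i hi
    have hL' : (0 : ℝ) < L := by exact_mod_cast hL
    have := hQ.add_smul_mem hx.2 hy.1 (t := (i : ℝ) / L)
      ⟨by positivity, by rw [div_le_one hL']; exact_mod_cast hi⟩
    rwa [smul_smul, div_mul_cancel₀ _ hL'.ne'] at this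
  by_contra! hcon
  have : ∀ i ≤ L, x + (i : ℝ) • h ∈ E := by
    intro i
    induction i with
    | zero => intro _; simpa using hx.1
    | succ j ih =>
      intro hj
      have := hcon j hj ⟨ih (by omega), hmem j (by omega)⟩
      rw [add_assoc] at this
      convert this using 2
      push_cast
      rw [add_smul, one_smul]
  exact hy.2 (this L le_rfl)

/-- Nonlocal perimeter at scale `2⁻ⁿ`, localized to `Q`. -/
def nlPer {d : ℕ} (n : ℕ) (E Q : Set (EuclideanSpace ℝ (Fin d))) : ℝ≥0∞ :=
  ENNReal.ofReal ((2 : ℝ) ^ n) * ∫⁻ k in closedBall (0 : EuclideanSpace ℝ (Fin d)) d,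
    volume {x | x ∈ E ∩ Q ∧ x + ((2 : ℝ) ^ n)⁻¹ • k ∉ E}

lemma iso_aux {d : ℕ} (n : ℕ) {E : Set (EuclideanSpace ℝ (Fin d))} (hE : MeasurableSet E)
    (p : ℤ × (Fin d → ℤ)) (hn : 0 ≤ n + p.1) :
    volume (E ∩ dyCube p) * volume (dyCube p \ E) ≤
      ENNReal.ofReal ((2 : ℝ) ^ p.1) ^ d * (ENNReal.ofReal ((2 : ℝ) ^ p.1) *
        nlPer n E (dyCube p)) := by
  set Q := dyCube p with hQdef
  have hQ : MeasurableSet Q := measurableSet_dyCube p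
  set ℓ : ℝ := (2 : ℝ) ^ p.1 with hl
  have hl0 : 0 < ℓ := by positivity
  let T : Set (EuclideanSpace ℝ (Fin d) × EuclideanSpace ℝ (Fin d)) :=
    {q | q.1 ∈ E ∩ Q ∧ q.1 + ℓ • q.2 ∈ Q \ E}
  have hT : MeasurableSet T := by
    apply MeasurableSet.inter
    · exact measurable_fst (hE.inter hQ)
    · exact (measurable_fst.add (measurable_snd.const_smul ℓ)) (hQ.diff hE)
  have h1 : volume (E ∩ Q) * volume (Q \ E) =
      ENNReal.ofReal ℓ ^ d * ∫⁻ x, volume (Prod.mk x ⁻¹' T) := by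
    rw [← lintegral_const_mul _ (measurable_measure_prodMk_left hT), mul_comm,
      ← lintegral_indicator_const (hE.inter hQ)]
    refine lintegral_congr fun x => ?_
    by_cases hx : x ∈ E ∩ Q
    · rw [indicator_of_mem hx]
      have : Prod.mk x ⁻¹' T = (fun k => ℓ • k) ⁻¹' ((fun y => x + y) ⁻¹' (Q \ E)) := by
        ext k
        exact ⟨fun h => h.2, fun h => ⟨hx, h⟩⟩
      rw [this, Measure.addHaar_preimage_smul _ hl0.ne', measure_preimage_add, ← mul_assoc,
        ← ENNReal.ofReal_pow hl0.le, ← ENNReal.ofReal_mul (by positivity), finrank_euclideanSpace,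
        Fintype.card_fin, abs_of_pos (by positivity), mul_inv_cancel₀ (by positivity)]
      simp
    · rw [indicator_of_notMem hx]
      have : Prod.mk x ⁻¹' T = ∅ := by
        ext k
        simp only [mem_preimage, mem_empty_iff_false, iff_false]
        exact fun h => hx h.1
      simp [this]
  have h2 : ∫⁻ x, volume (Prod.mk x ⁻¹' T) = ∫⁻ k, volume ((fun x => (x, k)) ⁻¹' T) := by
    rw [← Measure.prod_apply hT, ← Measure.prod_apply_symm hT]
  rw [h1, h2]
  gcongr
  obtain ⟨j, hj⟩ := Int.eq_ofNat_of_zero_le hn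
  have hL : ((2 ^ j : ℕ) : ℝ) = ℓ * 2 ^ n := by
    rw [hl, ← zpow_natCast (2 : ℝ) n, ← zpow_add₀ (by norm_num), add_comm, hj]
    simp
  have h3 : ∀ k, volume ((fun x => (x, k)) ⁻¹' T) ≤
      (closedBall (0 : EuclideanSpace ℝ (Fin d)) d).indicator (fun k => ((2 ^ j : ℕ) : ℝ≥0∞) *
        volume {x | x ∈ E ∩ Q ∧ x + ((2 : ℝ) ^ n)⁻¹ • k ∉ E}) k := by
    intro k
    by_cases hk : k ∈ closedBall (0 : EuclideanSpace ℝ (Fin d)) d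
    · rw [indicator_of_mem hk]
      set h := ((2 : ℝ) ^ n)⁻¹ • k with hh
      have hlk : ℓ • k = ((2 ^ j : ℕ) : ℝ) • h := by
        rw [hL, hh, smul_smul, mul_assoc, mul_inv_cancel₀ (by positivity), mul_one]
      have hsub : (fun x => (x, k)) ⁻¹' T ⊆ ⋃ i ∈ Finset.range (2 ^ j),
          (fun x => x + (i : ℝ) • h) ⁻¹' {x | x ∈ E ∩ Q ∧ x + h ∉ E} := by
        intro x hx
        have hx2 : x + ℓ • k ∈ Q \ E := hx.2
        rw [hlk] at hx2
        obtain ⟨i, hi, h'⟩ := exists_step E Q (convex_dyCube p) (2 ^ j) (by positivity) x h hx.1 hx2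
        simp only [mem_iUnion]
        exact ⟨i, Finset.mem_range.2 hi, h'⟩
      refine (measure_mono hsub).trans ((measure_biUnion_finset_le _ _).trans ?_)
      simp only [measure_preimage_add_right]
      simp
    · have : (fun x => (x, k)) ⁻¹' T = ∅ := by
        ext x
        simp only [mem_preimage, mem_empty_iff_false, iff_false]
        rintro ⟨h1, h2⟩
        apply hk
        have := norm_sub_le_dyCube p h2.1 h1.2
        simp only [add_sub_cancel_left, norm_smul, Real.norm_eq_abs, abs_of_pos hl0] at this
        rw [mem_closedBall_zero_iff]
        rw [← hl, mul_comm] at this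
        exact le_of_mul_le_mul_right this hl0
      rw [this]; simp
  refine (lintegral_mono h3).trans ?_
  rw [lintegral_indicator measurableSet_closedBall, nlPer, ← mul_assoc,
    ← ENNReal.ofReal_mul hl0.le, ← hL, lintegral_const_mul' _ _ (by simp)]
  gcongr
  rw [ENNReal.ofReal_natCast]

lemma iso {d : ℕ} (n : ℕ) {E : Set (EuclideanSpace ℝ (Fin d))} (hE : MeasurableSet E)
    (p : ℤ × (Fin d → ℤ)) (hn : 0 ≤ n + p.1) (hd : 1 ≤ d)
    (h1 : (2 ^ (d + 1))⁻¹ * volume (dyCube p) ≤ volume (E ∩ dyCube p))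
    (h2 : volume (E ∩ dyCube p) ≤ 2⁻¹ * volume (dyCube p)) :
    ENNReal.ofReal ((2 : ℝ) ^ p.1) ^ (d - 1) ≤ 2 ^ (d + 2) * nlPer n E (dyCube p) := by
  have h := iso_aux n hE p hn
  have hv := volume_dyCube p
  set a := ENNReal.ofReal ((2 : ℝ) ^ p.1) with ha
  have ha0 : a ≠ 0 := by
    rw [ha, Ne, ENNReal.ofReal_eq_zero, not_le]; positivity
  have hat : a ≠ ⊤ := ENNReal.ofReal_ne_top
  rw [hv] at h1 h2
  have h3 : 2⁻¹ * a ^ d ≤ volume (dyCube p \ E) := by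
    have h4 : volume (E ∩ dyCube p) + volume (dyCube p \ E) = a ^ d := by
      rw [inter_comm, measure_inter_add_sdiff _ hE, hv]
    have h5 : a ^ d ≤ 2⁻¹ * a ^ d + volume (dyCube p \ E) := by
      rw [← h4]; rw [← h4] at h2; gcongr
    have h6 : a ^ d = 2⁻¹ * a ^ d + 2⁻¹ * a ^ d := by
      rw [← add_mul, ENNReal.inv_two_add_inv_two, one_mul]
    nth_rewrite 1 [h6] at h5
    exact (ENNReal.add_le_add_iff_left (ENNReal.mul_ne_top (by simp)
      (ENNReal.pow_ne_top hat))).1 h5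
  have h4 := (mul_le_mul' h1 h3).trans h
  obtain ⟨e, rfl⟩ : ∃ e, d = e + 1 := ⟨d - 1, by omega⟩
  have h5 : a ^ (e + 1) * (a * ((2 ^ (e + 1 + 1))⁻¹ * 2⁻¹ * a ^ e)) ≤
      a ^ (e + 1) * (a * nlPer n E (dyCube p)) := by
    refine le_trans (le_of_eq ?_) h4
    ring
  rw [ENNReal.mul_le_mul_iff_right (by simp [ha0]) (ENNReal.pow_ne_top hat),
    ENNReal.mul_le_mul_iff_right ha0 hat] at h5
  have h6 : (2 : ℝ≥0∞) ^ (e + 1 + 2) * ((2 ^ (e + 1 + 1))⁻¹ * 2⁻¹) = 1 := by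
    rw [← ENNReal.mul_inv (by simp) (by simp), ← pow_succ]
    exact ENNReal.mul_inv_cancel (by simp) (by simp)
  calc a ^ (e + 1 - 1) = 2 ^ (e + 1 + 2) * ((2 ^ (e + 1 + 1))⁻¹ * 2⁻¹ * a ^ e) := by
        rw [← mul_assoc, h6, one_mul]; simp
    _ ≤ _ := by gcongr

lemma nlPer_set_measurable {d : ℕ} (n : ℕ) {E Q : Set (EuclideanSpace ℝ (Fin d))}
    (hE : MeasurableSet E) (hQ : MeasurableSet Q) :
    MeasurableSet {q : EuclideanSpace ℝ (Fin d) × EuclideanSpace ℝ (Fin d) |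
      q.2 ∈ E ∩ Q ∧ q.2 + ((2 : ℝ) ^ n)⁻¹ • q.1 ∉ E} := by
  apply MeasurableSet.inter
  · exact measurable_snd (hE.inter hQ)
  · exact (measurable_snd.add (measurable_fst.const_smul ((2 : ℝ) ^ n)⁻¹)) hE.compl

lemma sum_nlPer_le {d : ℕ} (n : ℕ) {E : Set (EuclideanSpace ℝ (Fin d))} (hE : MeasurableSet E)
    {ι : Type*} (s : Finset ι) (Q : ι → Set (EuclideanSpace ℝ (Fin d)))
    (hQ : ∀ i, MeasurableSet (Q i)) (hdisj : (s : Set ι).PairwiseDisjoint Q) :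
    ∑ i ∈ s, nlPer n E (Q i) ≤ nlPer n E univ := by
  unfold nlPer
  rw [← Finset.mul_sum, ← lintegral_finsetSum]
  · gcongr with k
    rw [← measure_biUnion_finset]
    · apply measure_mono
      intro x hx
      simp only [mem_iUnion] at hx
      obtain ⟨i, _, hx⟩ := hx
      exact ⟨⟨hx.1.1, trivial⟩, hx.2⟩
    · intro i hi j hj hij
      refine (hdisj hi hj hij).mono ?_ ?_ <;> exact fun x hx => hx.1.2
    · intro i _
      exact measurable_prodMk_left (nlPer_set_measurable n hE (hQ i))
  · intro i _
    exact measurable_measure_prodMk_left (nlPer_set_measurable n hE (hQ i))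

lemma exists_max_cube {d : ℕ} (hd : 1 ≤ d) {E : Set (EuclideanSpace ℝ (Fin d))} (hE : IsOpen E)
    (hfin : volume E ≠ ⊤) {x : EuclideanSpace ℝ (Fin d)} (hx : x ∈ E) :
    ∃ p : ℤ × (Fin d → ℤ), x ∈ dyCube p ∧
      (2 ^ (d + 1))⁻¹ * volume (dyCube p) < volume (E ∩ dyCube p) ∧
      ∀ q : ℤ × (Fin d → ℤ), p.1 < q.1 → dyCube p ⊆ dyCube q →
        volume (E ∩ dyCube q) ≤ (2 ^ (d + 1))⁻¹ * volume (dyCube q) := by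
  let z : ℤ → ℤ × (Fin d → ℤ) := fun m => (m, fun i => ⌊x i / (2 : ℝ) ^ m⌋)
  have hz : ∀ m, x ∈ dyCube (z m) := fun m i => rfl
  have hzq : ∀ q : ℤ × (Fin d → ℤ), x ∈ dyCube q → q = z q.1 := by
    intro q hq
    exact Prod.ext rfl (funext fun i => (hq i).symm)
  have hbdd : ∃ b : ℤ, ∀ m : ℤ,
      (2 ^ (d + 1))⁻¹ * volume (dyCube (z m)) < volume (E ∩ dyCube (z m)) → m ≤ b := by
    obtain ⟨N, hN⟩ := ENNReal.exists_nat_gt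
      (r := 2 ^ (d + 1) * volume E) (ENNReal.mul_ne_top (by simp) hfin)
    refine ⟨N, fun m hm => ?_⟩
    by_contra! hlt
    obtain ⟨j, rfl⟩ := Int.eq_ofNat_of_zero_le (show 0 ≤ m by omega)
    have hj : N ≤ j := by omega
    rw [volume_dyCube] at hm
    have h1 : (2 ^ (d + 1) : ℝ≥0∞) * ((2 ^ (d + 1))⁻¹ * ENNReal.ofReal ((2 : ℝ) ^ (z j).1) ^ d) ≤
        2 ^ (d + 1) * volume E := by
      gcongr
      exact hm.le.trans (measure_mono inter_subset_left)
    rw [← mul_assoc, ENNReal.mul_inv_cancel (by simp) (by simp), one_mul] at h1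
    have h2 : (N : ℝ≥0∞) ≤ ENNReal.ofReal ((2 : ℝ) ^ (z j).1) ^ d := by
      have h3 : ENNReal.ofReal ((2 : ℝ) ^ (z j).1) = ((2 ^ j : ℕ) : ℝ≥0∞) := by
        rw [← ENNReal.ofReal_natCast]; simp [z]
      rw [h3]
      norm_cast
      calc N ≤ j := hj
        _ ≤ 2 ^ j := Nat.lt_two_pow_self.le
        _ ≤ (2 ^ j) ^ d := Nat.le_self_pow (by omega) _
    exact absurd (h2.trans h1) (not_le.2 hN)
  have hne : ∃ m : ℤ,
      (2 ^ (d + 1))⁻¹ * volume (dyCube (z m)) < volume (E ∩ dyCube (z m)) := by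
    obtain ⟨ρ, hρ, hball⟩ := Metric.isOpen_iff.1 hE x hx
    obtain ⟨j, hj⟩ := exists_pow_lt_of_lt_one (show 0 < ρ / d by
      have : (0 : ℝ) < d := by exact_mod_cast hd
      positivity) (show (1 / 2 : ℝ) < 1 by norm_num)
    refine ⟨-j, ?_⟩
    have hsub : dyCube (z (-j)) ⊆ E := by
      intro y hy
      apply hball
      rw [mem_ball, dist_eq_norm]
      refine (norm_sub_le_dyCube _ hy (hz _)).trans_lt ?_
      have : (0 : ℝ) < d := by exact_mod_cast hd
      rw [lt_div_iff₀ this] at hj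
      simpa [z, mul_comm] using hj
    rw [inter_eq_right.2 hsub, volume_dyCube]
    set a := ENNReal.ofReal ((2 : ℝ) ^ (z (-j)).1) with ha
    have ha0 : a ≠ 0 := by
      rw [ha, Ne, ENNReal.ofReal_eq_zero, not_le]; positivity
    have hat : a ≠ ⊤ := ENNReal.ofReal_ne_top
    nth_rewrite 2 [← one_mul (a ^ d)]
    rw [ENNReal.mul_lt_mul_iff_left (by simp [ha0]) (ENNReal.pow_ne_top hat)]
    rw [ENNReal.inv_lt_one]
    exact one_lt_pow₀ (by norm_num) (by omega)
  obtain ⟨m, hm, hmax⟩ := Int.exists_greatest_of_bdd hbdd hne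
  refine ⟨z m, hz m, hm, fun q hq hsub => ?_⟩
  by_contra! hcon
  rw [hzq q (hsub (hz m))] at hcon
  exact absurd (hmax _ hcon) (not_le.2 hq)

lemma dens_le_half {d : ℕ} {E : Set (EuclideanSpace ℝ (Fin d))} {p : ℤ × (Fin d → ℤ)}
    (h : ∀ q : ℤ × (Fin d → ℤ), p.1 < q.1 → dyCube p ⊆ dyCube q →
        volume (E ∩ dyCube q) ≤ (2 ^ (d + 1))⁻¹ * volume (dyCube q))
    {x : EuclideanSpace ℝ (Fin d)} (hx : x ∈ dyCube p) :
    volume (E ∩ dyCube p) ≤ 2⁻¹ * volume (dyCube p) := by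
  let q : ℤ × (Fin d → ℤ) := (p.1 + 1, fun i => ⌊x i / (2 : ℝ) ^ (p.1 + 1)⌋)
  have hsub : dyCube p ⊆ dyCube q := dyCube_nested (by simp [q]) hx (fun i => rfl)
  refine (measure_mono (inter_subset_inter_right _ hsub)).trans
    ((h q (by simp [q]) hsub).trans (le_of_eq ?_))
  rw [volume_dyCube, volume_dyCube]
  have : ENNReal.ofReal ((2 : ℝ) ^ q.1) = 2 * ENNReal.ofReal ((2 : ℝ) ^ p.1) := by
    simp only [q]
    rw [zpow_add₀ (by norm_num), mul_comm, ENNReal.ofReal_mul (by norm_num)]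
    simp
  rw [this, mul_pow, ← mul_assoc, pow_succ, ENNReal.mul_inv (by simp) (by simp),
    mul_right_comm _ _ ((2 : ℝ≥0∞) ^ d), ENNReal.inv_mul_cancel (by simp) (by simp), one_mul]

lemma boxing {d : ℕ} (hd : 2 ≤ d) {E : Set (EuclideanSpace ℝ (Fin d))} (hE : IsOpen E)
    (hfin : volume E ≠ ⊤) :
    hausdorffContent d ((d : ℝ) - 1) E ≤ Filter.liminf
      (fun n => (d : ℝ≥0∞) ^ (d - 1) * 2 ^ (d + 2) * nlPer n E univ) Filter.atTop := by
  classical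
  let S : Set (ℤ × (Fin d → ℤ)) := {p | (2 ^ (d + 1))⁻¹ * volume (dyCube p) < volume (E ∩ dyCube p) ∧
      ∀ q : ℤ × (Fin d → ℤ), p.1 < q.1 → dyCube p ⊆ dyCube q →
        volume (E ∩ dyCube q) ≤ (2 ^ (d + 1))⁻¹ * volume (dyCube q)}
  have hd0 : (0 : ℝ) < d := by exact_mod_cast (by omega : 0 < d)
  let c : ℤ × (Fin d → ℤ) → EuclideanSpace ℝ (Fin d) :=
    fun p => WithLp.toLp 2 (fun i => p.2 i * (2 : ℝ) ^ p.1)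
  have hc : ∀ p, c p ∈ dyCube p := by
    intro p
    rw [mem_dyCube_iff]
    intro i
    have : (0 : ℝ) < 2 ^ p.1 := by positivity
    simp only [c, mem_Ico]
    constructor <;> nlinarith
  have hdisj : ∀ p ∈ S, ∀ q ∈ S, p.1 ≤ q.1 → p ≠ q → Disjoint (dyCube p) (dyCube q) := by
    intro p hp q hq hle hne
    rw [Set.disjoint_left]
    intro x hxp hxq
    rcases hle.lt_or_eq with hlt | heq
    · exact absurd (hp.2 q hlt (dyCube_nested hle hxp hxq)) (not_le.2 hq.1)
    · apply hne
      refine Prod.ext heq (funext fun i => ?_)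
      rw [← hxp i, ← hxq i, heq]
  refine (content_le (by have : (2 : ℝ) ≤ d := by exact_mod_cast hd
                         linarith) E S c (fun p => d * (2 : ℝ) ^ p.1)
    (fun p => by positivity) ?_).trans ?_
  · intro x hx
    obtain ⟨p, hxp, hp⟩ := exists_max_cube (by omega) hE hfin hx
    simp only [mem_iUnion]
    refine ⟨p, hp, ?_⟩
    rw [mem_closedBall, dist_eq_norm]
    exact norm_sub_le_dyCube p hxp (hc p)
  · rw [ENNReal.tsum_eq_iSup_sum]
    refine iSup_le fun s => ?_
    refine Filter.le_liminf_of_le (by isBoundedDefault) ?_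
    filter_upwards [Filter.eventually_ge_atTop (∑ p ∈ s, p.1.1.natAbs)] with n hn
    calc ∑ p ∈ s, ENNReal.ofReal ((d * (2 : ℝ) ^ p.1.1) ^ ((d : ℝ) - 1))
        ≤ ∑ p ∈ s, (d : ℝ≥0∞) ^ (d - 1) * 2 ^ (d + 2) * nlPer n E (dyCube p.1) := by
          refine Finset.sum_le_sum fun p hp => ?_
          have h1 : ((d : ℝ) - 1) = ((d - 1 : ℕ) : ℝ) := by
            rw [Nat.cast_sub (by omega)]; simp
          rw [h1, Real.rpow_natCast, ENNReal.ofReal_pow (by positivity),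
            ENNReal.ofReal_mul (by positivity), mul_pow, ENNReal.ofReal_natCast, mul_assoc]
          gcongr
          refine iso n hE.measurableSet p.1 ?_ (by omega) p.2.1.le (dens_le_half p.2.2 (hc p.1))
          have := Finset.single_le_sum (f := fun p : S => p.1.1.natAbs) (fun _ _ => Nat.zero_le _) hp
          omega
      _ = (d : ℝ≥0∞) ^ (d - 1) * 2 ^ (d + 2) * ∑ p ∈ s, nlPer n E (dyCube p.1) := by
          rw [Finset.mul_sum]
      _ ≤ _ := by
          gcongr
          refine sum_nlPer_le n hE.measurableSet s (fun p => dyCube p.1)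
            (fun p => measurableSet_dyCube _) ?_
          intro p _ q _ hpq
          have hpq' : p.1 ≠ q.1 := fun h => hpq (Subtype.ext h)
          rcases le_total p.1.1 q.1.1 with h | h
          · exact hdisj _ p.2 _ q.2 h hpq'
          · exact (hdisj _ q.2 _ p.2 h hpq'.symm).symm

lemma translation_est {d : ℕ} {f : EuclideanSpace ℝ (Fin d) → ℝ} (hf : ContDiff ℝ 1 f)
    (h : EuclideanSpace ℝ (Fin d)) :
    ∫⁻ x, ENNReal.ofReal (f x - f (x + h)) ≤ ‖h‖ₑ * ∫⁻ x, ‖fderiv ℝ f x‖ₑ := by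
  have hcont : Continuous (fderiv ℝ f) := hf.continuous_fderiv (by norm_num)
  have key : ∀ x, ENNReal.ofReal (f x - f (x + h)) ≤
      ∫⁻ s in Ioc (0 : ℝ) 1, ‖h‖ₑ * ‖fderiv ℝ f (x + s • h)‖ₑ := by
    intro x
    have hder : ∀ s ∈ uIcc (0 : ℝ) 1, HasDerivAt (fun s : ℝ => f (x + s • h))
        (fderiv ℝ f (x + s • h) h) s := by
      intro s _
      have h1 : HasDerivAt (fun s : ℝ => x + s • h) h s := by
        simpa using ((hasDerivAt_id s).smul_const h).const_add x
      exact ((hf.differentiable (by norm_num)).differentiableAt.hasFDerivAt).comp_hasDerivAt s h1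
    have hc2 : Continuous (fun s : ℝ => fderiv ℝ f (x + s • h) h) := by fun_prop
    have hint := intervalIntegral.integral_eq_sub_of_hasDerivAt hder (hc2.intervalIntegrable _ _)
    simp only [one_smul, zero_smul, add_zero] at hint
    calc ENNReal.ofReal (f x - f (x + h)) ≤ ‖f (x + h) - f x‖ₑ := by
          rw [← ofReal_norm]
          apply ENNReal.ofReal_le_ofReal
          rw [Real.norm_eq_abs, abs_sub_comm]
          exact le_abs_self _
      _ = ‖∫ s in Ioc (0 : ℝ) 1, fderiv ℝ f (x + s • h) h‖ₑ := by
          rw [← hint, intervalIntegral.integral_of_le zero_le_one]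
      _ ≤ ∫⁻ s in Ioc (0 : ℝ) 1, ‖fderiv ℝ f (x + s • h) h‖ₑ := enorm_integral_le_lintegral_enorm _
      _ ≤ _ := by
          refine lintegral_mono fun s => ?_
          rw [mul_comm]
          exact ContinuousLinearMap.le_opENorm _ _
  refine (lintegral_mono key).trans ?_
  rw [lintegral_lintegral_swap]
  · have : ∀ s : ℝ, ∫⁻ x, ‖h‖ₑ * ‖fderiv ℝ f (x + s • h)‖ₑ = ‖h‖ₑ * ∫⁻ x, ‖fderiv ℝ f x‖ₑ := by
      intro s
      rw [lintegral_const_mul' _ _ (by simp),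
        lintegral_add_right_eq_self (fun x => ‖fderiv ℝ f x‖ₑ) (s • h)]
    simp [this]
  · apply Measurable.aemeasurable
    simp only [Function.uncurry_def]
    apply Measurable.const_mul
    apply Measurable.enorm
    apply Continuous.measurable
    fun_prop

lemma coarea_nl {d : ℕ} (n : ℕ) {f : EuclideanSpace ℝ (Fin d) → ℝ} (hf : ContDiff ℝ 1 f) :
    Measurable (fun t : ℝ => nlPer n {x | t < f x} univ) ∧
    ∫⁻ t in Ioi (0 : ℝ), nlPer n {x | t < f x} univ ≤
      (d * volume (closedBall (0 : EuclideanSpace ℝ (Fin d)) d)) * ∫⁻ x, ‖fderiv ℝ f x‖ₑ := by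
  have hfm : Measurable f := hf.continuous.measurable
  set c : ℝ := ((2 : ℝ) ^ n)⁻¹ with hc
  have hc0 : 0 < c := by positivity
  let T : Set ((ℝ × EuclideanSpace ℝ (Fin d)) × EuclideanSpace ℝ (Fin d)) :=
    {q | q.1.1 < f q.2 ∧ f (q.2 + c • q.1.2) ≤ q.1.1}
  have hT : MeasurableSet T := by
    apply MeasurableSet.inter
    · exact measurableSet_lt (measurable_fst.comp measurable_fst) (hfm.comp measurable_snd)
    · exact measurableSet_le (hfm.comp (measurable_snd.add
        ((measurable_snd.comp measurable_fst).const_smul c))) (measurable_fst.comp measurable_fst)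
  have hset : ∀ t k, {x | x ∈ {x | t < f x} ∩ univ ∧ x + c • k ∉ {x | t < f x}} =
      Prod.mk (t, k) ⁻¹' T := by
    intro t k
    ext x
    simp [T]
  have hm : Measurable (fun q : ℝ × EuclideanSpace ℝ (Fin d) => volume (Prod.mk q ⁻¹' T)) :=
    measurable_measure_prodMk_left hT
  have hm2 : Measurable (fun t : ℝ => ∫⁻ k in closedBall (0 : EuclideanSpace ℝ (Fin d)) d,
      volume (Prod.mk (t, k) ⁻¹' T)) := hm.lintegral_prod_right'
  simp only [nlPer, ← hc, hset]
  refine ⟨hm2.const_mul _, ?_⟩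
  rw [lintegral_const_mul _ hm2, lintegral_lintegral_swap hm.aemeasurable]
  have hk : ∀ k ∈ closedBall (0 : EuclideanSpace ℝ (Fin d)) d,
      ∫⁻ t in Ioi (0 : ℝ), volume (Prod.mk (t, k) ⁻¹' T) ≤
        ENNReal.ofReal c * d * ∫⁻ x, ‖fderiv ℝ f x‖ₑ := by
    intro k hk
    let U : Set (ℝ × EuclideanSpace ℝ (Fin d)) := {q | q.1 < f q.2 ∧ f (q.2 + c • k) ≤ q.1}
    have hU : MeasurableSet U := by
      apply MeasurableSet.inter
      · exact measurableSet_lt measurable_fst (hfm.comp measurable_snd)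
      · exact measurableSet_le (hfm.comp (measurable_snd.add_const _)) measurable_fst
    calc _ ≤ ∫⁻ t : ℝ, volume (Prod.mk t ⁻¹' U) := setLIntegral_le_lintegral _ _
      _ = ∫⁻ x, volume ((fun t => (t, x)) ⁻¹' U) := by
          rw [← Measure.prod_apply hU, ← Measure.prod_apply_symm hU]
      _ = ∫⁻ x, ENNReal.ofReal (f x - f (x + c • k)) := by
          refine lintegral_congr fun x => ?_
          rw [← Real.volume_Ico]
          congr 1
          ext t
          simp [U, and_comm]
      _ ≤ ‖c • k‖ₑ * ∫⁻ x, ‖fderiv ℝ f x‖ₑ := translation_est hf _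
      _ ≤ _ := by
          gcongr
          rw [← ofReal_norm, norm_smul, Real.norm_eq_abs, abs_of_pos hc0,
            ENNReal.ofReal_mul hc0.le]
          gcongr
          rw [← ENNReal.ofReal_natCast]
          exact ENNReal.ofReal_le_ofReal (mem_closedBall_zero_iff.1 hk)
  refine (mul_le_mul_right (setLIntegral_mono' measurableSet_closedBall hk) _).trans (le_of_eq ?_)
  rw [setLIntegral_const]
  have : ENNReal.ofReal ((2 : ℝ) ^ n) * ENNReal.ofReal c = 1 := by
    rw [← ENNReal.ofReal_mul (by positivity), hc, mul_inv_cancel₀ (by positivity)]; simp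
  calc _ = (ENNReal.ofReal ((2 : ℝ) ^ n) * ENNReal.ofReal c) * ((d *
    volume (closedBall (0 : EuclideanSpace ℝ (Fin d)) d)) * ∫⁻ x, ‖fderiv ℝ f x‖ₑ) := by ring
    _ = _ := by rw [this, one_mul]

/-- `∫_0^∞ H^{d-1}_∞({f > t}) dt ≲ ‖∇f‖_{L^1}`. -/
theorem integral_content_superlevel_le (d : ℕ) (hd : 2 ≤ d) :
    ∃ C : ℝ≥0∞, 0 < C ∧ C < ⊤ ∧ ∀ f : EuclideanSpace ℝ (Fin d) → ℝ,
      ContDiff ℝ (⊤ : ℕ∞) f → HasCompactSupport f →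
      ∫⁻ t in Set.Ioi (0 : ℝ), hausdorffContent d ((d : ℝ) - 1) {x | t < f x} ≤
        C * ENNReal.ofReal (∫ x, ‖fderiv ℝ f x‖) := by
  set K : ℝ≥0∞ := (d : ℝ≥0∞) ^ (d - 1) * 2 ^ (d + 2) with hK
  set V : ℝ≥0∞ := d * volume (closedBall (0 : EuclideanSpace ℝ (Fin d)) d) with hV
  have hd0 : (d : ℝ≥0∞) ≠ 0 := by simp; omega
  have hKt : K ≠ ⊤ := ENNReal.mul_ne_top (ENNReal.pow_ne_top (by simp)) (ENNReal.pow_ne_top (by simp))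
  refine ⟨K * V, ?_, ?_, ?_⟩
  · have hV0 : V ≠ 0 := mul_ne_zero hd0
      (measure_closedBall_pos _ _ (by exact_mod_cast (by omega : 0 < d))).ne'
    exact pos_iff_ne_zero.2 (mul_ne_zero (mul_ne_zero (pow_ne_zero _ hd0) (by simp)) hV0)
  · exact (ENNReal.mul_ne_top hKt (ENNReal.mul_ne_top (by simp)
      measure_closedBall_lt_top.ne)).lt_top
  · intro f hf hsupp
    have hf1 : ContDiff ℝ 1 f := hf.of_le (by exact_mod_cast le_top)
    have hint : Integrable (fderiv ℝ f) :=
      (hf1.continuous_fderiv (by norm_num)).integrable_of_hasCompactSupport (hsupp.fderiv ℝ)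
    rw [ofReal_integral_norm_eq_lintegral_enorm hint]
    calc _ ≤ ∫⁻ t in Set.Ioi (0 : ℝ), Filter.liminf
          (fun n => K * nlPer n {x | t < f x} univ) Filter.atTop := by
          refine setLIntegral_mono' measurableSet_Ioi fun t ht => ?_
          refine boxing hd (isOpen_lt continuous_const hf.continuous) ?_
          refine ((measure_mono ?_).trans_lt hsupp.isCompact.measure_lt_top).ne
          intro x hx
          apply subset_tsupport
          exact ((mem_Ioi.1 ht).trans hx).ne'
      _ ≤ Filter.liminf (fun n => ∫⁻ t in Set.Ioi (0 : ℝ), K * nlPer n {x | t < f x} univ)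
          Filter.atTop :=
          lintegral_liminf_le fun n => (coarea_nl n hf1).1.const_mul _
      _ ≤ Filter.liminf (fun _ : ℕ => K * V * ∫⁻ x, ‖fderiv ℝ f x‖ₑ) Filter.atTop := by
          refine Filter.liminf_le_liminf (Filter.Eventually.of_forall fun n => ?_)
          rw [lintegral_const_mul _ (coarea_nl n hf1).1, mul_assoc K V]
          refine mul_le_mul_right ?_ K
          exact (coarea_nl n hf1).2
      _ = _ := by simp
end
end

section
/- Adams's inequality (one direction): let a ∈ (0,d) and let f be a nonnegative locally integrable function on ℝ^d with ‖M_a[f]‖_{L^∞} < ∞, where M_a[f](x) = sup_{r>0} r^{a-d} ∫_{|x-y|≤r} f(y) dy is the fractional maximal function. Then ‖I_a[f]‖_{BMO} ≤ C‖M_a[f]‖_{L^∞} with C depending only on a and d. -/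
open MeasureTheory Real Metric Set
open scoped FourierTransform ENNReal
noncomputable section

section helpers

lemma aux_ball (d : ℕ) (a : ℝ) (f : EuclideanSpace ℝ (Fin d) → ℝ)
    (x : EuclideanSpace ℝ (Fin d)) (ρ : ℝ) (hρ : 0 < ρ) :
    ∫⁻ y in closedBall x ρ, ENNReal.ofReal |f y| ≤
      ENNReal.ofReal ((2 * ρ) ^ ((d : ℝ) - a)) * essSup (fracMaximal d a f) volume := by
  have h1 : ∀ᵐ z ∂(volume : Measure (EuclideanSpace ℝ (Fin d))),
      fracMaximal d a f z ≤ essSup (fracMaximal d a f) volume := ENNReal.ae_le_essSup _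
  obtain ⟨z, hz, hzx⟩ : ∃ z, fracMaximal d a f z ≤ essSup (fracMaximal d a f) volume ∧
      z ∈ ball x ρ := by
    by_contra! hcon
    have h2 : ball x ρ ⊆ {z | ¬ fracMaximal d a f z ≤ essSup (fracMaximal d a f) volume} :=
      fun z hz hz' => hcon z hz' hz
    have h3 := measure_mono_null h2 h1
    exact (measure_ball_pos volume x hρ).ne' h3
  have h4 : ENNReal.ofReal ((2 * ρ) ^ (a - (d : ℝ))) *
      ∫⁻ y in closedBall z (2 * ρ), ENNReal.ofReal |f y| ≤
      essSup (fracMaximal d a f) volume := by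
    refine le_trans ?_ hz
    unfold fracMaximal
    exact le_iSup₂_of_le (2 * ρ) (by positivity) le_rfl
  have hsub : closedBall x ρ ⊆ closedBall z (2 * ρ) := by
    intro y hy
    rw [mem_closedBall] at *
    rw [mem_ball] at hzx
    have := dist_triangle y x z
    rw [dist_comm x z] at this
    linarith
  have hone : ENNReal.ofReal ((2 * ρ) ^ ((d : ℝ) - a)) *
      ENNReal.ofReal ((2 * ρ) ^ (a - (d : ℝ))) = 1 := by
    rw [← ENNReal.ofReal_mul (by positivity), ← Real.rpow_add (by positivity)]
    simp
  calc ∫⁻ y in closedBall x ρ, ENNReal.ofReal |f y|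
      ≤ ∫⁻ y in closedBall z (2 * ρ), ENNReal.ofReal |f y| := lintegral_mono_set hsub
    _ = ENNReal.ofReal ((2 * ρ) ^ ((d : ℝ) - a)) * (ENNReal.ofReal ((2 * ρ) ^ (a - (d : ℝ))) *
      ∫⁻ y in closedBall z (2 * ρ), ENNReal.ofReal |f y|) := by
        rw [← mul_assoc, hone, one_mul]
    _ ≤ _ := by gcongr

lemma aux_tail (d : ℕ) (a : ℝ) (had : a < d) (f : EuclideanSpace ℝ (Fin d) → ℝ)
    (x : EuclideanSpace ℝ (Fin d)) (r : ℝ) (hr : 0 < r) :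
    ∫⁻ y in (ball x (2 * r))ᶜ, ENNReal.ofReal |f y| * ENNReal.ofReal (‖x - y‖ ^ (a - (d : ℝ) - 1)) ≤
      ENNReal.ofReal (4 ^ ((d : ℝ) - a) / r) * essSup (fracMaximal d a f) volume := by
  set S := essSup (fracMaximal d a f) volume
  set A : ℕ → Set (EuclideanSpace ℝ (Fin d)) := fun k =>
    closedBall x (2 ^ (k + 1) * (2 * r)) \ ball x (2 ^ k * (2 * r)) with hA
  have hcov : (ball x (2 * r))ᶜ ⊆ ⋃ k, A k := by
    intro y hy
    rw [mem_compl_iff, mem_ball, not_lt] at hy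
    obtain ⟨k, hk1, hk2⟩ := exists_nat_pow_near (x := dist y x / (2 * r)) (y := (2 : ℝ))
      (by rw [le_div_iff₀ (by positivity)]; linarith) (by norm_num)
    rw [le_div_iff₀ (by positivity)] at hk1
    rw [div_lt_iff₀ (by positivity)] at hk2
    simp only [mem_iUnion, hA, mem_sdiff, mem_closedBall, mem_ball, not_lt]
    exact ⟨k, hk2.le, hk1⟩
  have hmeas : ∀ k, MeasurableSet (A k) := fun k => measurableSet_closedBall.diff measurableSet_ball
  have hk : ∀ k, ∫⁻ y in A k, ENNReal.ofReal |f y| *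
      ENNReal.ofReal (‖x - y‖ ^ (a - (d : ℝ) - 1)) ≤
      ENNReal.ofReal (4 ^ ((d : ℝ) - a) / r * ((1 / 2) / 2 ^ k)) * S := by
    intro k
    have hR : 0 < 2 ^ k * (2 * r) := by positivity
    calc ∫⁻ y in A k, ENNReal.ofReal |f y| * ENNReal.ofReal (‖x - y‖ ^ (a - (d : ℝ) - 1))
        ≤ ∫⁻ y in A k, ENNReal.ofReal |f y| *
          ENNReal.ofReal ((2 ^ k * (2 * r)) ^ (a - (d : ℝ) - 1)) := by
          refine setLIntegral_mono' (hmeas k) fun y hy => ?_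
          refine mul_le_mul_right (ENNReal.ofReal_le_ofReal ?_) _
          refine Real.rpow_le_rpow_of_nonpos hR ?_ (by linarith)
          have := hy.2
          rw [mem_ball, not_lt, dist_comm, dist_eq_norm] at this
          exact this
      _ = (∫⁻ y in A k, ENNReal.ofReal |f y|) *
          ENNReal.ofReal ((2 ^ k * (2 * r)) ^ (a - (d : ℝ) - 1)) :=
          lintegral_mul_const' _ _ ENNReal.ofReal_ne_top
      _ ≤ (ENNReal.ofReal ((2 * (2 ^ (k + 1) * (2 * r))) ^ ((d : ℝ) - a)) * S) *
          ENNReal.ofReal ((2 ^ k * (2 * r)) ^ (a - (d : ℝ) - 1)) := by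
          gcongr
          exact (lintegral_mono_set sdiff_subset).trans (aux_ball d a f x _ (by positivity))
      _ = _ := by
          rw [mul_right_comm, ← ENNReal.ofReal_mul (by positivity)]
          congr 2
          have : (2 * (2 ^ (k + 1) * (2 * r))) = 4 * (2 ^ k * (2 * r)) := by ring
          rw [this, Real.mul_rpow (by norm_num) hR.le, mul_assoc, ← Real.rpow_add hR]
          have : (d : ℝ) - a + (a - d - 1) = -1 := by ring
          rw [this, Real.rpow_neg_one]
          field_simp
  calc _ ≤ ∫⁻ y in ⋃ k, A k, ENNReal.ofReal |f y| *
      ENNReal.ofReal (‖x - y‖ ^ (a - (d : ℝ) - 1)) := lintegral_mono_set hcov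
    _ ≤ ∑' k, ∫⁻ y in A k, ENNReal.ofReal |f y| *
      ENNReal.ofReal (‖x - y‖ ^ (a - (d : ℝ) - 1)) := lintegral_iUnion_le _ _
    _ ≤ ∑' k : ℕ, ENNReal.ofReal (4 ^ ((d : ℝ) - a) / r * ((1 / 2) / 2 ^ k)) * S :=
      ENNReal.tsum_le_tsum hk
    _ = _ := by
      rw [ENNReal.tsum_mul_right, ← ENNReal.ofReal_tsum_of_nonneg (fun k => by positivity)
        ((summable_geometric_two' 1).mul_left _), tsum_mul_left, tsum_geometric_two', mul_one]

lemma aux_local (d : ℕ) (a : ℝ) (ha : 0 < a) (had : a < d)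
    (y : EuclideanSpace ℝ (Fin d)) (R : ℝ) (hR : 0 < R) :
    ∫⁻ x in ball y R, ENNReal.ofReal (‖x - y‖ ^ (a - (d : ℝ))) ≤
      ENNReal.ofReal (2 ^ ((d : ℝ) - a) * R ^ a * (1 - (1 / 2) ^ a)⁻¹) *
        volume (ball (0 : EuclideanSpace ℝ (Fin d)) 1) := by
  set V := volume (ball (0 : EuclideanSpace ℝ (Fin d)) 1)
  set A : ℕ → Set (EuclideanSpace ℝ (Fin d)) := fun k =>
    closedBall y (R * (1 / 2) ^ k) \ closedBall y (R * (1 / 2) ^ (k + 1)) with hA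
  have hmeas : ∀ k, MeasurableSet (A k) := fun k =>
    measurableSet_closedBall.diff measurableSet_closedBall
  have hcov : ball y R ⊆ {y} ∪ ⋃ k, A k := by
    intro x hx
    rw [mem_ball] at hx
    rcases eq_or_ne x y with h | h
    · left; exact h
    right
    obtain ⟨k, hk1, hk2⟩ := exists_nat_pow_near_of_lt_one (x := dist x y / R) (y := (1 / 2 : ℝ))
      (div_pos (dist_pos.2 h) hR) (by rw [div_le_one hR]; exact hx.le) (by norm_num) (by norm_num)
    rw [lt_div_iff₀ hR] at hk1
    rw [div_le_iff₀ hR] at hk2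
    simp only [mem_iUnion, hA, mem_sdiff, mem_closedBall, not_le]
    exact ⟨k, by linarith, by linarith⟩
  have hd : 0 < d := by
    have : (0 : ℝ) < d := ha.trans had
    exact_mod_cast this
  have hb0 : (0 : ℝ) < (1 / 2) ^ a := by positivity
  have hb1 : ((1 : ℝ) / 2) ^ a < 1 := Real.rpow_lt_one (by norm_num) (by norm_num) ha
  have hk : ∀ k, ∫⁻ x in A k, ENNReal.ofReal (‖x - y‖ ^ (a - (d : ℝ))) ≤
      ENNReal.ofReal (2 ^ ((d : ℝ) - a) * R ^ a * ((1 / 2) ^ a) ^ k) * V := by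
    intro k
    have hρ : 0 < R * (1 / 2) ^ k := by positivity
    have hρ' : 0 < R * (1 / 2) ^ (k + 1) := by positivity
    calc ∫⁻ x in A k, ENNReal.ofReal (‖x - y‖ ^ (a - (d : ℝ)))
        ≤ ∫⁻ x in A k, ENNReal.ofReal ((R * (1 / 2) ^ (k + 1)) ^ (a - (d : ℝ))) := by
          refine setLIntegral_mono' (hmeas k) fun x hx => ?_
          refine ENNReal.ofReal_le_ofReal ?_
          refine Real.rpow_le_rpow_of_nonpos hρ' ?_ (by linarith)
          have := hx.2
          rw [mem_closedBall, not_le, dist_eq_norm] at this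
          exact this.le
      _ = ENNReal.ofReal ((R * (1 / 2) ^ (k + 1)) ^ (a - (d : ℝ))) * volume (A k) := by
          rw [setLIntegral_const]
      _ ≤ ENNReal.ofReal ((R * (1 / 2) ^ (k + 1)) ^ (a - (d : ℝ))) *
          (ENNReal.ofReal ((R * (1 / 2) ^ k) ^ d) * V) := by
          gcongr
          refine (measure_mono sdiff_subset).trans ?_
          rw [Measure.addHaar_closedBall _ _ hρ.le]
          simp [V]
      _ = _ := by
          rw [← mul_assoc, ← ENNReal.ofReal_mul (by positivity)]
          congr 2
          have e1 : R * (1 / 2) ^ (k + 1) = 2⁻¹ * (R * (1 / 2) ^ k) := by ring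
          have e2 : (2⁻¹ : ℝ) ^ (a - (d : ℝ)) = 2 ^ ((d : ℝ) - a) := by
            rw [Real.inv_rpow (by norm_num), ← Real.rpow_neg (by norm_num)]; congr 1; ring
          rw [e1, Real.mul_rpow (by norm_num) hρ.le, e2, mul_assoc, ← Real.rpow_natCast _ d,
            ← Real.rpow_add hρ, sub_add_cancel, Real.mul_rpow hR.le (by positivity),
            ← Real.rpow_natCast _ k, ← Real.rpow_natCast _ k, ← Real.rpow_mul (by norm_num),
            ← Real.rpow_mul (by norm_num), mul_comm a, mul_assoc]
  have hz : ∫⁻ x in ({y} : Set (EuclideanSpace ℝ (Fin d))),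
      ENNReal.ofReal (‖x - y‖ ^ (a - (d : ℝ))) = 0 := by
    rw [lintegral_singleton, sub_self, norm_zero, Real.zero_rpow (by linarith)]
    simp
  calc _ ≤ ∫⁻ x in {y} ∪ ⋃ k, A k, ENNReal.ofReal (‖x - y‖ ^ (a - (d : ℝ))) :=
        lintegral_mono_set hcov
    _ ≤ (∫⁻ x in ({y} : Set (EuclideanSpace ℝ (Fin d))), ENNReal.ofReal (‖x - y‖ ^ (a - (d : ℝ)))) +
        ∫⁻ x in ⋃ k, A k, ENNReal.ofReal (‖x - y‖ ^ (a - (d : ℝ))) := lintegral_union_le _ _ _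
    _ = ∫⁻ x in ⋃ k, A k, ENNReal.ofReal (‖x - y‖ ^ (a - (d : ℝ))) := by rw [hz, zero_add]
    _ ≤ ∑' k, ∫⁻ x in A k, ENNReal.ofReal (‖x - y‖ ^ (a - (d : ℝ))) := lintegral_iUnion_le _ _
    _ ≤ ∑' k : ℕ, ENNReal.ofReal (2 ^ ((d : ℝ) - a) * R ^ a * ((1 / 2) ^ a) ^ k) * V :=
      ENNReal.tsum_le_tsum hk
    _ = _ := by
      rw [ENNReal.tsum_mul_right, ← ENNReal.ofReal_tsum_of_nonneg (fun k => by positivity)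
        ((summable_geometric_of_lt_one hb0.le hb1).mul_left _), tsum_mul_left,
        tsum_geometric_of_lt_one hb0.le hb1]

lemma aux_kernel (q s t : ℝ) (hq : q < 0) (ht : 0 < t) (hs : t / 2 ≤ s) :
    |s ^ q - t ^ q| ≤ (-q) * (2 ^ (1 - q)) * t ^ (q - 1) * |s - t| := by
  have key := Convex.norm_image_sub_le_of_norm_deriv_le (𝕜 := ℝ) (f := fun u : ℝ => u ^ q)
    (s := Ici (t / 2)) (C := (-q) * (t / 2) ^ (q - 1)) (x := t) (y := s)
    (fun u hu => by
      have hu' : t / 2 ≤ u := hu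
      exact (Real.hasDerivAt_rpow_const (Or.inl (by linarith))).differentiableAt)
    (fun u hu => by
      have hu' : t / 2 ≤ u := hu
      have hu0 : 0 < u := by linarith
      rw [(Real.hasDerivAt_rpow_const (p := q) (Or.inl hu0.ne')).deriv, norm_mul,
        Real.norm_eq_abs, Real.norm_eq_abs, abs_of_neg hq, abs_of_nonneg (by positivity)]
      have : u ^ (q - 1) ≤ (t / 2) ^ (q - 1) :=
        Real.rpow_le_rpow_of_nonpos (by linarith) hu' (by linarith)
      have : 0 ≤ -q := by linarith
      gcongr)
    (convex_Ici _) (by simp only [mem_Ici]; linarith) hs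
  simp only [Real.norm_eq_abs] at key
  refine key.trans (le_of_eq ?_)
  have : (t / 2) ^ (q - 1) = 2 ^ (1 - q) * t ^ (q - 1) := by
    rw [Real.div_rpow ht.le (by norm_num), div_eq_inv_mul, ← Real.rpow_neg (by norm_num)]
    congr 2; ring
  rw [this]; ring

lemma aux_osc {α : Type*} [MeasurableSpace α] (μ : Measure α) (B : Set α) (hB0 : μ B ≠ 0)
    (hBt : μ B ≠ ⊤) (g : α → ℝ) (hg : IntegrableOn g B μ) (c : ℝ) (L : ℝ≥0∞)
    (hL : ∫⁻ x in B, ENNReal.ofReal |g x - c| ∂μ ≤ L * μ B) :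
    ENNReal.ofReal (⨍ y in B, |g y - ⨍ z in B, g z ∂μ| ∂μ) ≤ 2 * L := by
  set m := ⨍ z in B, g z ∂μ with hm
  have : IsFiniteMeasure (μ.restrict B) := ⟨by simpa using hBt.lt_top⟩
  have hcc : ∀ c : ℝ, IntegrableOn (fun _ => c) B μ := fun c => integrable_const c
  have hgc : IntegrableOn (fun x => g x - c) B μ := hg.sub (hcc c)
  have hgm : IntegrableOn (fun x => g x - m) B μ := hg.sub (hcc m)
  have hpos : 0 < μ.real B := ENNReal.toReal_pos hB0 hBt
  have hmc : |c - m| ≤ ⨍ y in B, |g y - c| ∂μ := by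
    have h1 : m - c = ⨍ y in B, (g y - c) ∂μ := by
      rw [hm, setAverage_eq, setAverage_eq, integral_sub hg (hcc c), setIntegral_const]
      simp only [smul_eq_mul]
      field_simp
    rw [abs_sub_comm, h1, setAverage_eq, setAverage_eq]
    simp only [smul_eq_mul]
    rw [abs_mul, abs_of_pos (inv_pos.2 hpos)]
    gcongr
    exact abs_integral_le_integral_abs
  have h2 : ⨍ y in B, |g y - m| ∂μ ≤ 2 * ⨍ y in B, |g y - c| ∂μ := by
    have h3 : ∫ y in B, |g y - m| ∂μ ≤ ∫ y in B, (|g y - c| + |c - m|) ∂μ := by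
      refine integral_mono hgm.abs (hgc.abs.add (hcc _)) fun y => ?_
      have := abs_add_le (g y - c) (c - m)
      simpa using this
    rw [integral_add hgc.abs (hcc _), setIntegral_const] at h3
    have h4 : ⨍ y in B, |g y - m| ∂μ ≤ ⨍ y in B, |g y - c| ∂μ + |c - m| := by
      rw [setAverage_eq, setAverage_eq]
      simp only [smul_eq_mul] at *
      calc _ ≤ (μ.real B)⁻¹ * (∫ y in B, |g y - c| ∂μ + μ.real B * |c - m|) := by gcongr
        _ = _ := by field_simp
    linarith
  have h5 : ENNReal.ofReal (⨍ y in B, |g y - c| ∂μ) ≤ L := by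
    rw [setAverage_eq, smul_eq_mul, ENNReal.ofReal_mul (by positivity),
      ofReal_integral_eq_lintegral_ofReal hgc.abs (ae_of_all _ fun _ => abs_nonneg _),
      ENNReal.ofReal_inv_of_pos hpos, Measure.real, ENNReal.ofReal_toReal hBt]
    calc _ ≤ (μ B)⁻¹ * (L * μ B) := by gcongr
      _ = L := by rw [mul_comm, mul_assoc, ENNReal.mul_inv_cancel hB0 hBt, mul_one]
  calc _ ≤ ENNReal.ofReal (2 * ⨍ y in B, |g y - c| ∂μ) := ENNReal.ofReal_le_ofReal h2
    _ = 2 * ENNReal.ofReal (⨍ y in B, |g y - c| ∂μ) := by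
      rw [ENNReal.ofReal_mul (by norm_num)]; simp
    _ ≤ _ := by gcongr

lemma aux_main (d : ℕ) (a : ℝ) (ha : 0 < a) (had : a < d) :
    ∃ C : ℝ≥0∞, C < ⊤ ∧ ∀ f : EuclideanSpace ℝ (Fin d) → ℝ,
      LocallyIntegrable f volume →
      essSup (fracMaximal d a f) volume < ⊤ → ∀ (x₀ : EuclideanSpace ℝ (Fin d)) (r : ℝ), 0 < r →
      IntegrableOn (fun y => f y * ‖x₀ - y‖ ^ (a - (d : ℝ))) (ball x₀ (2 * r))ᶜ →
      IntegrableOn (rieszPotential d a f) (ball x₀ r) ∧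
      ∃ c : ℝ, ∫⁻ x in ball x₀ r, ENNReal.ofReal |rieszPotential d a f x - c| ≤
        (C * essSup (fracMaximal d a f) volume) * volume (ball x₀ r) := by
  set p : ℝ := (d : ℝ) - a with hp
  have hp0 : 0 < p := by linarith
  have hb1 : ((1 : ℝ) / 2) ^ a < 1 := Real.rpow_lt_one (by norm_num) (by norm_num) ha
  set C1 : ℝ := 2 ^ p * 3 ^ a * (1 - (1 / 2) ^ a)⁻¹ * 4 ^ p with hC1
  have hb2 : 0 < (1 - ((1 : ℝ) / 2) ^ a) := by linarith
  have hC1p : 0 < C1 := by positivity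
  set C2 : ℝ := p * 2 ^ (1 + p) * 4 ^ p with hC2
  set κ := rieszConst d a
  refine ⟨ENNReal.ofReal |κ| * (ENNReal.ofReal C1 + ENNReal.ofReal C2),
    ENNReal.mul_lt_top ENNReal.ofReal_lt_top
      (ENNReal.add_lt_top.2 ⟨ENNReal.ofReal_lt_top, ENNReal.ofReal_lt_top⟩), ?_⟩
  intro f hf hS x₀ r hr hIntFar
  set S := essSup (fracMaximal d a f) volume
  set A := ball x₀ (2 * r) with hA
  set B := ball x₀ r with hB
  have hBt : volume B ≠ ⊤ := measure_ball_lt_top.ne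
  have : IsFiniteMeasure (volume.restrict B) := ⟨by simpa using hBt.lt_top⟩
  have hfm : AEStronglyMeasurable f volume := hf.aestronglyMeasurable
  have hKm : Measurable (fun z : EuclideanSpace ℝ (Fin d) × EuclideanSpace ℝ (Fin d) =>
      ‖z.1 - z.2‖ ^ (a - (d : ℝ))) := by fun_prop
  have hKx : ∀ x : EuclideanSpace ℝ (Fin d), Measurable
      (fun y : EuclideanSpace ℝ (Fin d) => ‖x - y‖ ^ (a - (d : ℝ))) := fun x => by fun_prop
  -- pointwise comparison
  have hcmp : ∀ x ∈ B, ∀ y ∈ Aᶜ, 2 * r ≤ ‖x₀ - y‖ ∧ ‖x₀ - y‖ / 2 ≤ ‖x - y‖ ∧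
      |‖x - y‖ - ‖x₀ - y‖| ≤ r := by
    intro x hx y hy
    rw [hB, mem_ball, dist_eq_norm] at hx
    rw [hA, mem_compl_iff, mem_ball, not_lt, dist_comm, dist_eq_norm] at hy
    have h1 : |‖x - y‖ - ‖x₀ - y‖| ≤ r := by
      have := abs_norm_sub_norm_le (x - y) (x₀ - y)
      rw [sub_sub_sub_cancel_right] at this
      linarith
    refine ⟨hy, ?_, h1⟩
    have := (abs_le.1 h1).1
    linarith
  have hker : ∀ x ∈ B, ∀ y ∈ Aᶜ, |‖x - y‖ ^ (a - (d : ℝ)) - ‖x₀ - y‖ ^ (a - (d : ℝ))| ≤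
      p * 2 ^ (1 + p) * r * ‖x₀ - y‖ ^ (a - (d : ℝ) - 1) := by
    intro x hx y hy
    obtain ⟨h1, h2, h3⟩ := hcmp x hx y hy
    have h4 := aux_kernel (a - (d : ℝ)) ‖x - y‖ ‖x₀ - y‖ (by linarith) (by linarith) h2
    have e1 : -(a - (d : ℝ)) = p := by rw [hp]; ring
    have e2 : 1 - (a - (d : ℝ)) = 1 + p := by rw [hp]; ring
    rw [e1, e2] at h4
    refine h4.trans ?_
    have h5 : 0 ≤ p * 2 ^ (1 + p) * ‖x₀ - y‖ ^ (a - (d : ℝ) - 1) := by positivity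
    nlinarith [mul_le_mul_of_nonneg_left h3 h5]
  -- far part: integrability of the difference
  have htail := aux_tail d a had f x₀ r hr
  have hdiffL : ∀ x ∈ B, ∫⁻ y in Aᶜ, ENNReal.ofReal
      |f y * ‖x - y‖ ^ (a - (d : ℝ)) - f y * ‖x₀ - y‖ ^ (a - (d : ℝ))| ≤ ENNReal.ofReal C2 * S := by
    intro x hx
    calc _ ≤ ∫⁻ y in Aᶜ, ENNReal.ofReal (p * 2 ^ (1 + p) * r) * (ENNReal.ofReal |f y| *
            ENNReal.ofReal (‖x₀ - y‖ ^ (a - (d : ℝ) - 1))) := by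
          refine setLIntegral_mono' measurableSet_ball.compl fun y hy => ?_
          rw [← ENNReal.ofReal_mul (abs_nonneg _), ← ENNReal.ofReal_mul (by positivity)]
          refine ENNReal.ofReal_le_ofReal ?_
          rw [← mul_sub, abs_mul]
          calc _ ≤ |f y| * (p * 2 ^ (1 + p) * r * ‖x₀ - y‖ ^ (a - (d : ℝ) - 1)) :=
                mul_le_mul_of_nonneg_left (hker x hx y hy) (abs_nonneg _)
            _ = _ := by ring
      _ = ENNReal.ofReal (p * 2 ^ (1 + p) * r) * ∫⁻ y in Aᶜ, (ENNReal.ofReal |f y| *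
            ENNReal.ofReal (‖x₀ - y‖ ^ (a - (d : ℝ) - 1))) :=
          lintegral_const_mul' _ _ ENNReal.ofReal_ne_top
      _ ≤ ENNReal.ofReal (p * 2 ^ (1 + p) * r) * (ENNReal.ofReal (4 ^ p / r) * S) := by
          gcongr
      _ = _ := by
          rw [← mul_assoc, ← ENNReal.ofReal_mul (by positivity)]
          congr 2
          rw [hC2]; field_simp
  have hdiffI : ∀ x ∈ B, IntegrableOn
      (fun y => f y * ‖x - y‖ ^ (a - (d : ℝ)) - f y * ‖x₀ - y‖ ^ (a - (d : ℝ))) Aᶜ := by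
    intro x hx
    refine ⟨((hfm.mul (hKx x).aestronglyMeasurable).sub
      (hfm.mul (hKx x₀).aestronglyMeasurable)).restrict, ?_⟩
    rw [hasFiniteIntegral_iff_norm]
    simp only [Real.norm_eq_abs]
    exact (hdiffL x hx).trans_lt (ENNReal.mul_lt_top ENNReal.ofReal_lt_top hS)
  have hfarI : ∀ x ∈ B, IntegrableOn (fun y => f y * ‖x - y‖ ^ (a - (d : ℝ))) Aᶜ := by
    intro x hx
    have := (hdiffI x hx).add hIntFar
    refine this.congr (ae_of_all _ fun y => ?_)
    simp
  -- near part
  set G : EuclideanSpace ℝ (Fin d) → ℝ≥0∞ := fun x =>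
    ∫⁻ y in A, ENNReal.ofReal |f y * ‖x - y‖ ^ (a - (d : ℝ))| with hG
  have hprod : AEStronglyMeasurable (fun z : EuclideanSpace ℝ (Fin d) × EuclideanSpace ℝ (Fin d) =>
      f z.2 * ‖z.1 - z.2‖ ^ (a - (d : ℝ))) ((volume.restrict B).prod volume) :=
    hfm.comp_snd.mul hKm.aestronglyMeasurable
  have hprodA : AEStronglyMeasurable (fun z : EuclideanSpace ℝ (Fin d) × EuclideanSpace ℝ (Fin d) =>
      f z.2 * ‖z.1 - z.2‖ ^ (a - (d : ℝ))) ((volume.restrict B).prod (volume.restrict A)) :=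
    hfm.restrict.comp_snd.mul hKm.aestronglyMeasurable
  have hprodE : AEMeasurable (fun z : EuclideanSpace ℝ (Fin d) × EuclideanSpace ℝ (Fin d) =>
      ENNReal.ofReal |f z.2 * ‖z.1 - z.2‖ ^ (a - (d : ℝ))|)
      ((volume.restrict B).prod (volume.restrict A)) :=
    hprodA.aemeasurable.abs.ennreal_ofReal
  have hGm : AEMeasurable G (volume.restrict B) := hprodE.lintegral_prod_right'
  have hGL : ∫⁻ x in B, G x ≤ ENNReal.ofReal C1 * S * volume B := by
    calc ∫⁻ x in B, G x = ∫⁻ y in A, ∫⁻ x in B,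
          ENNReal.ofReal |f y * ‖x - y‖ ^ (a - (d : ℝ))| := lintegral_lintegral_swap hprodE
      _ ≤ ∫⁻ y in A, ENNReal.ofReal |f y| * (ENNReal.ofReal (2 ^ p * (3 * r) ^ a *
          (1 - (1 / 2) ^ a)⁻¹) * volume (ball (0 : EuclideanSpace ℝ (Fin d)) 1)) := by
          refine setLIntegral_mono' measurableSet_ball fun y hy => ?_
          simp only [abs_mul, ENNReal.ofReal_mul (abs_nonneg (f y))]
          rw [lintegral_const_mul' _ _ ENNReal.ofReal_ne_top]
          gcongr
          refine le_trans ?_ (aux_local d a ha had y (3 * r) (by positivity))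
          have hsub : B ⊆ ball y (3 * r) := by
            intro x hx
            rw [hB, mem_ball] at hx
            rw [hA, mem_ball, dist_comm] at hy
            rw [mem_ball]
            have := dist_triangle x x₀ y
            linarith
          refine (lintegral_mono_set hsub).trans (le_of_eq ?_)
          refine lintegral_congr fun x => ?_
          rw [abs_of_nonneg (by positivity)]
      _ = (∫⁻ y in A, ENNReal.ofReal |f y|) * (ENNReal.ofReal (2 ^ p * (3 * r) ^ a *
          (1 - (1 / 2) ^ a)⁻¹) * volume (ball (0 : EuclideanSpace ℝ (Fin d)) 1)) :=
          lintegral_mul_const' _ _ (ENNReal.mul_ne_top ENNReal.ofReal_ne_top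
            measure_ball_lt_top.ne)
      _ ≤ (ENNReal.ofReal ((2 * (2 * r)) ^ p) * S) * (ENNReal.ofReal (2 ^ p * (3 * r) ^ a *
          (1 - (1 / 2) ^ a)⁻¹) * volume (ball (0 : EuclideanSpace ℝ (Fin d)) 1)) := by
          gcongr
          exact (lintegral_mono_set ball_subset_closedBall).trans
            (aux_ball d a f x₀ (2 * r) (by positivity))
      _ = (ENNReal.ofReal ((2 * (2 * r)) ^ p) * ENNReal.ofReal (2 ^ p * (3 * r) ^ a *
          (1 - (1 / 2) ^ a)⁻¹)) * S * volume (ball (0 : EuclideanSpace ℝ (Fin d)) 1) := by ring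
      _ = (ENNReal.ofReal C1 * ENNReal.ofReal (r ^ d)) * S *
          volume (ball (0 : EuclideanSpace ℝ (Fin d)) 1) := by
          rw [← ENNReal.ofReal_mul (by positivity), ← ENNReal.ofReal_mul (by positivity)]
          congr 3
          have e1 : 2 * (2 * r) = 4 * r := by ring
          have e2 : r ^ d = r ^ p * r ^ a := by
            rw [← Real.rpow_add hr, hp, sub_add_cancel, Real.rpow_natCast]
          rw [e1, Real.mul_rpow (by norm_num) hr.le, Real.mul_rpow (by norm_num) hr.le, e2, hC1]
          ring
      _ = _ := by
          rw [hB, Measure.addHaar_ball_of_pos _ _ hr]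
          simp only [finrank_euclideanSpace, Fintype.card_fin]
          ring
  have hGt : ∫⁻ x in B, G x ≠ ⊤ := ne_top_of_le_ne_top
    (ENNReal.mul_ne_top (ENNReal.mul_ne_top ENNReal.ofReal_ne_top hS.ne) hBt) hGL
  have hGae : ∀ᵐ x ∂(volume.restrict B), G x < ⊤ := ae_lt_top' hGm hGt
  -- the constant
  set c := κ * ∫ y in Aᶜ, f y * ‖x₀ - y‖ ^ (a - (d : ℝ)) with hc
  have hpt : ∀ᵐ x ∂(volume.restrict B), ENNReal.ofReal |rieszPotential d a f x - c| ≤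
      ENNReal.ofReal |κ| * (G x + ENNReal.ofReal C2 * S) := by
    filter_upwards [hGae, ae_restrict_mem measurableSet_ball] with x hGx hx
    have hnI : IntegrableOn (fun y => f y * ‖x - y‖ ^ (a - (d : ℝ))) A := by
      refine ⟨(hfm.mul (hKx x).aestronglyMeasurable).restrict, ?_⟩
      rw [hasFiniteIntegral_iff_norm]
      simpa only [Real.norm_eq_abs] using hGx
    have hfull : Integrable (fun y => f y * ‖x - y‖ ^ (a - (d : ℝ))) := by
      rw [← integrableOn_univ, ← union_compl_self A]
      exact hnI.union (hfarI x hx)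
    have heq : rieszPotential d a f x - c = κ * ((∫ y in A, f y * ‖x - y‖ ^ (a - (d : ℝ))) +
        ∫ y in Aᶜ, (f y * ‖x - y‖ ^ (a - (d : ℝ)) - f y * ‖x₀ - y‖ ^ (a - (d : ℝ)))) := by
      rw [integral_sub (hfarI x hx) hIntFar, hc]
      unfold rieszPotential
      rw [← integral_add_compl (measurableSet_ball : MeasurableSet A) hfull]
      ring
    rw [heq, abs_mul, ENNReal.ofReal_mul (abs_nonneg _)]
    gcongr
    refine (ENNReal.ofReal_le_ofReal (abs_add_le _ _)).trans ?_
    rw [ENNReal.ofReal_add (abs_nonneg _) (abs_nonneg _)]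
    refine add_le_add ?_ (le_trans ?_ (hdiffL x hx))
    · simp only [hG]
      rw [← ofReal_integral_eq_lintegral_ofReal hnI.abs (ae_of_all _ fun _ => abs_nonneg _)]
      exact ENNReal.ofReal_le_ofReal abs_integral_le_integral_abs
    · rw [← ofReal_integral_eq_lintegral_ofReal (hdiffI x hx).abs
        (ae_of_all _ fun _ => abs_nonneg _)]
      exact ENNReal.ofReal_le_ofReal abs_integral_le_integral_abs
  have hL : ∫⁻ x in B, ENNReal.ofReal |rieszPotential d a f x - c| ≤
      (ENNReal.ofReal |κ| * (ENNReal.ofReal C1 + ENNReal.ofReal C2) * S) * volume B := by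
    calc _ ≤ ∫⁻ x in B, ENNReal.ofReal |κ| * (G x + ENNReal.ofReal C2 * S) := lintegral_mono_ae hpt
      _ = ENNReal.ofReal |κ| * ((∫⁻ x in B, G x) + ENNReal.ofReal C2 * S * volume B) := by
        rw [lintegral_const_mul' _ _ ENNReal.ofReal_ne_top, lintegral_add_left' hGm,
          setLIntegral_const]
      _ ≤ ENNReal.ofReal |κ| * (ENNReal.ofReal C1 * S * volume B +
          ENNReal.ofReal C2 * S * volume B) := by gcongr
      _ = _ := by ring
  refine ⟨?_, c, hL⟩
  have hgm : AEStronglyMeasurable (rieszPotential d a f) (volume.restrict B) :=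
    (hprod.integral_prod_right').const_mul κ
  have hgc : Integrable (fun x => rieszPotential d a f x - c) (volume.restrict B) := by
    refine ⟨hgm.sub aestronglyMeasurable_const, ?_⟩
    rw [hasFiniteIntegral_iff_norm]
    simp only [Real.norm_eq_abs]
    refine hL.trans_lt (ENNReal.mul_lt_top (ENNReal.mul_lt_top (ENNReal.mul_lt_top
      ENNReal.ofReal_lt_top (ENNReal.add_lt_top.2 ⟨ENNReal.ofReal_lt_top, ENNReal.ofReal_lt_top⟩))
      hS) hBt.lt_top)
  have := hgc.add (integrable_const c)
  refine this.congr (ae_of_all _ fun y => ?_)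
  simp

lemma aux_div (d : ℕ) (a : ℝ) (had : a < d) (f : EuclideanSpace ℝ (Fin d) → ℝ)
    (hf : LocallyIntegrable f volume) (x₀ : EuclideanSpace ℝ (Fin d)) (r : ℝ) (hr : 0 < r)
    (hIntFar : ¬ IntegrableOn (fun y => f y * ‖x₀ - y‖ ^ (a - (d : ℝ))) (ball x₀ (2 * r))ᶜ)
    (x : EuclideanSpace ℝ (Fin d)) (hx : x ∈ ball x₀ r) : rieszPotential d a f x = 0 := by
  unfold rieszPotential
  rw [integral_undef, mul_zero]
  intro hI
  apply hIntFar
  have hfm : AEStronglyMeasurable f volume := hf.aestronglyMeasurable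
  have hKx : Measurable
      (fun y : EuclideanSpace ℝ (Fin d) => ‖x₀ - y‖ ^ (a - (d : ℝ))) := by fun_prop
  refine Integrable.mono' ((hI.abs.integrableOn (s := (ball x₀ (2 * r))ᶜ)).const_mul
    (2 ^ ((d : ℝ) - a))) (hfm.mul hKx.aestronglyMeasurable).restrict ?_
  filter_upwards [ae_restrict_mem measurableSet_ball.compl] with y hy
  rw [mem_ball, dist_eq_norm] at hx
  rw [mem_compl_iff, mem_ball, not_lt, dist_comm, dist_eq_norm] at hy
  have h1 := abs_le.1 (abs_norm_sub_norm_le (x - y) (x₀ - y))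
  rw [sub_sub_sub_cancel_right] at h1
  have hpos : 0 < ‖x - y‖ := by linarith
  have hle : ‖x - y‖ / 2 ≤ ‖x₀ - y‖ := by linarith
  have h2 : ‖x₀ - y‖ ^ (a - (d : ℝ)) ≤ 2 ^ ((d : ℝ) - a) * ‖x - y‖ ^ (a - (d : ℝ)) := by
    refine (Real.rpow_le_rpow_of_nonpos (by positivity) hle (by linarith)).trans (le_of_eq ?_)
    rw [Real.div_rpow hpos.le (by norm_num), div_eq_inv_mul, ← Real.rpow_neg (by norm_num), neg_sub]
  rw [Real.norm_eq_abs, abs_mul, abs_mul, abs_of_nonneg (a := ‖x₀ - y‖ ^ (a - (d : ℝ)))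
    (by positivity), abs_of_nonneg (a := ‖x - y‖ ^ (a - (d : ℝ))) (by positivity)]
  calc _ ≤ |f y| * (2 ^ ((d : ℝ) - a) * ‖x - y‖ ^ (a - (d : ℝ))) :=
        mul_le_mul_of_nonneg_left h2 (abs_nonneg _)
    _ = _ := by ring

end helpers

/-- Adams's inequality `‖I_a[f]‖_{BMO} ≲ ‖M_a[f]‖_{L^∞}`. -/
theorem adams_inequality (d : ℕ) (a : ℝ) (ha : 0 < a) (had : a < d) :
    ∃ C : ℝ≥0∞, 0 < C ∧ C < ⊤ ∧ ∀ f : EuclideanSpace ℝ (Fin d) → ℝ,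
      LocallyIntegrable f volume → (∀ x, 0 ≤ f x) →
      essSup (fracMaximal d a f) volume < ⊤ →
      bmoNorm d (rieszPotential d a f) ≤ C * essSup (fracMaximal d a f) volume := by
  obtain ⟨C, hC, hmain⟩ := aux_main d a ha had
  refine ⟨2 * C + 1, by positivity, ?_, ?_⟩
  · exact ENNReal.add_lt_top.2 ⟨ENNReal.mul_lt_top (by norm_num) hC, by norm_num⟩
  intro f hf _ hS
  unfold bmoNorm
  refine iSup_le fun x₀ => iSup_le fun r => iSup_le fun hr => ?_
  by_cases hIntFar : IntegrableOn (fun y => f y * ‖x₀ - y‖ ^ (a - (d : ℝ))) (ball x₀ (2 * r))ᶜ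
  · obtain ⟨hg, c, hL⟩ := hmain f hf hS x₀ r hr hIntFar
    refine (aux_osc volume (ball x₀ r) (measure_ball_pos volume x₀ hr).ne'
      measure_ball_lt_top.ne _ hg c _ hL).trans ?_
    rw [← mul_assoc]
    gcongr
    exact le_self_add
  · have h0 : ∀ x ∈ ball x₀ r, rieszPotential d a f x = 0 := aux_div d a had f hf x₀ r hr hIntFar
    have h1 : ⨍ z in ball x₀ r, rieszPotential d a f z = 0 := by
      rw [setAverage_eq, setIntegral_congr_fun measurableSet_ball h0]
      simp
    have h2 : ⨍ y in ball x₀ r, |rieszPotential d a f y -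
        ⨍ z in ball x₀ r, rieszPotential d a f z| = 0 := by
      rw [h1, setAverage_eq, setIntegral_congr_fun (g := fun _ => (0 : ℝ)) measurableSet_ball
        (fun y hy => by simp [h0 y hy])]
      simp
    rw [h2]
    simp
end
end
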